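/- arXiv:1211.3270 — 2 statements merged into one kernel-verified Lean document; each statement's English description precedes it below -/
import Mathlib

section
/- Let -1 < α, β < -1/2. Then for all t > 0 and θ, φ ∈ [0,π], 𝓗_t^{α,β}(θ,φ) = ∫_{(-1,1)} ∫_{(-1,1)} ∂_u ∂_v Ψ^{α,β}(t,θ,φ,u,v) Π_α(u) Π_β(v) du dv + ∫_{[-1,1]} ∫_{(-1,1)} (−∂_u Ψ^{α,β}(t,θ,φ,u,v)) Π_α(u) du dΠ_{-1/2}(v) + ∫_{(-1,1)} ∫_{[-1,1]} (−∂_v Ψ^{α,β}(t,θ,φ,u,v)) dΠ_{-1/2}(u) Π_β(v) dv + ∫_{[-1,1]} ∫_{[-1,1]} Ψ^{α,β}(t,θ,φ,u,v) dΠ_{-1/2}(u) dΠ_{-1/2}(v). -/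
open MeasureTheory Real Set
open scoped ENNReal Classical

noncomputable def cab (α β : ℝ) : ℝ :=
  Real.Gamma (α + β + 2) / (2 ^ (α + β + 1) * Real.Gamma (α + 1) * Real.Gamma (β + 1))

noncomputable def F4 (a₁ a₂ b₁ b₂ x y : ℝ) : ℝ :=
  ∑' p : ℕ × ℕ,
    (Polynomial.eval a₁ (ascPochhammer ℝ (p.1 + p.2)) *
      Polynomial.eval a₂ (ascPochhammer ℝ (p.1 + p.2))) /
    (Polynomial.eval b₁ (ascPochhammer ℝ p.1) * Polynomial.eval b₂ (ascPochhammer ℝ p.2) *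
      (Nat.factorial p.1) * (Nat.factorial p.2)) * x ^ p.1 * y ^ p.2

noncomputable def Hker (α β t θ φ : ℝ) : ℝ :=
  cab α β * Real.sinh (t / 2) / Real.cosh (t / 2) ^ (α + β + 2) *
    F4 ((α + β + 2) / 2) ((α + β + 3) / 2) (α + 1) (β + 1)
      ((Real.sin (θ / 2) * Real.sin (φ / 2) / Real.cosh (t / 2)) ^ 2)
      ((Real.cos (θ / 2) * Real.cos (φ / 2) / Real.cosh (t / 2)) ^ 2)

noncomputable def qf (θ φ u v : ℝ) : ℝ :=
  1 - u * Real.sin (θ / 2) * Real.sin (φ / 2) - v * Real.cos (θ / 2) * Real.cos (φ / 2)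

noncomputable def Psi (α β t θ φ u v : ℝ) : ℝ :=
  cab α β * Real.sinh (t / 2) / (Real.cosh (t / 2) - 1 + qf θ φ u v) ^ (α + β + 2)

noncomputable def PsiE (α β t θ φ u v : ℝ) : ℝ :=
  (Psi α β t θ φ u v + Psi α β t θ φ (-u) v + Psi α β t θ φ u (-v) +
    Psi α β t θ φ (-u) (-v)) / 4

noncomputable def PiMeas (ν : ℝ) : Measure ℝ :=
  if ν = -(1/2) then (2⁻¹ : ℝ≥0∞) • (Measure.dirac (-1) + Measure.dirac 1)
  else (volume.restrict (Icc (-1 : ℝ) 1)).withDensity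
    (fun u => ENNReal.ofReal
      (Real.Gamma (ν + 1) / (Real.sqrt π * Real.Gamma (ν + 1/2)) * (1 - u ^ 2) ^ (ν - 1/2)))

noncomputable def PiFun (γ u : ℝ) : ℝ :=
  Real.Gamma (γ + 1) / (Real.sqrt π * Real.Gamma (γ + 1/2)) *
    ∫ w in (0 : ℝ)..u, (1 - w ^ 2) ^ (γ - 1/2)

noncomputable def PiInt (ν : ℝ) (S : Set ℝ) (f : ℝ → ℝ) : ℝ :=
  if ν = -(1/2) then
    ((if (-1 : ℝ) ∈ S then f (-1) else 0) + (if (1 : ℝ) ∈ S then f 1 else 0)) / 2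
  else ∫ u in S, f u *
    (Real.Gamma (ν + 1) / (Real.sqrt π * Real.Gamma (ν + 1/2)) * (1 - u ^ 2) ^ (ν - 1/2))

noncomputable def muab (α β : ℝ) : Measure ℝ :=
  (volume.restrict (Icc (0 : ℝ) π)).withDensity
    (fun θ => ENNReal.ofReal (Real.sin (θ / 2) ^ (2 * α + 1) * Real.cos (θ / 2) ^ (2 * β + 1)))

def ballI (θ r : ℝ) : Set ℝ := Ioo (θ - r) (θ + r) ∩ Icc 0 π

/-!
In the variables `u, v`, the kernel `Ψ` is a constant times `(1 - x u - y v) ^ (-μ)` with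
`μ = α + β + 2` and `|x| + |y| < 1`, so it has a double power series converging on a bidisc of
radius greater than `1`. The right-hand side is the tensor product of the one-variable functionals
`f ↦ ∫ f dΠ_{-1/2} - ∫ f' Π_γ`, `γ = α, β`, and may therefore be applied to this series term by
term. The functional kills odd powers. Integrating the derivative of `u ^ n (1 - u ^ 2) Π_γ(u)`
expresses the difference of its values at `u ^ n` and `u ^ (n + 2)` by a beta integral, whence its
value at `u ^ (2 m)` is `(1/2)_m / (γ + 1)_m`. The duplication formulas for `(μ)_{2n}` and `(2n)!`
turn the resulting series into `F_4`.
-/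

/-! ### The binomial series in two variables -/

section BinomialSeries

open Finset.HasAntidiagonal (antidiagonal mem_antidiagonal)

theorem hasSum_ascPochhammer_mul_pow (μ : ℝ) {z : ℝ} (hz : |z| < 1) :
    HasSum (fun n => (ascPochhammer ℝ n).eval μ / n.factorial * z ^ n) ((1 - z) ^ (-μ)) := by
  have h := (one_div_one_sub_rpow_hasFPowerSeriesOnBall_zero μ).hasSum (y := z)
    (by simpa [← ofReal_norm] using hz)
  have hchoose (n : ℕ) :
      Ring.choose (μ + n - 1) n = (ascPochhammer ℝ n).eval μ / n.factorial := by
    have h2 := Ring.factorial_nsmul_multichoose_eq_ascPochhammer μ n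
    rw [Polynomial.ascPochhammer_smeval_eq_eval, nsmul_eq_mul] at h2
    rw [eq_div_iff (by positivity), mul_comm, ← h2, Ring.choose]
    congr 2
    ring
  rw [zero_add, one_div, ← rpow_neg (by linarith [(abs_lt.1 hz).2])] at h
  exact h.congr_fun fun n => by simp [hchoose, mul_comm]

theorem sum_antidiagonal_div_factorial_mul_pow (a : ℕ → ℝ) (x y : ℝ) (n : ℕ) :
    ∑ p ∈ antidiagonal n, a (p.1 + p.2) / (p.1.factorial * p.2.factorial) *
      x ^ p.1 * y ^ p.2 = a n / n.factorial * (x + y) ^ n := by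
  rw [Commute.add_pow' (Commute.all x y), Finset.mul_sum]
  refine Finset.sum_congr rfl fun p hp => ?_
  obtain rfl := mem_antidiagonal.1 hp
  rw [nsmul_eq_mul, Nat.cast_add_choose]
  field_simp

theorem summable_div_factorial_mul_pow_mul_pow {a : ℕ → ℝ} {x y : ℝ}
    (h : Summable fun n => a n / n.factorial * (|x| + |y|) ^ n) :
    Summable fun p : ℕ × ℕ => a (p.1 + p.2) / (p.1.factorial * p.2.factorial) *
      x ^ p.1 * y ^ p.2 := by
  rw [← summable_abs_iff,
    ← Finset.HasAntidiagonal.sigmaAntidiagonalEquivProd.summable_iff]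
  refine (summable_sigma_of_nonneg fun _ => abs_nonneg _).2
    ⟨fun n => Summable.of_finite, h.abs.congr fun n => ?_⟩
  rw [tsum_fintype, abs_mul, abs_div, Nat.abs_cast, abs_of_nonneg (a := (|x| + |y|) ^ n)
    (by positivity), ← sum_antidiagonal_div_factorial_mul_pow fun n => |a n|,
    ← Finset.sum_coe_sort]
  refine Finset.sum_congr rfl fun p _ => ?_
  simp [abs_mul, abs_div]

theorem hasSum_div_factorial_mul_pow_mul_pow {a : ℕ → ℝ} {x y s : ℝ}
    (habs : Summable fun n => a n / n.factorial * (|x| + |y|) ^ n)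
    (hs : HasSum (fun n => a n / n.factorial * (x + y) ^ n) s) :
    HasSum (fun p : ℕ × ℕ => a (p.1 + p.2) / (p.1.factorial * p.2.factorial) *
      x ^ p.1 * y ^ p.2) s := by
  have hsum := (summable_div_factorial_mul_pow_mul_pow habs).hasSum
  convert hsum
  refine hs.unique (((Finset.HasAntidiagonal.sigmaAntidiagonalEquivProd.hasSum_iff.2 hsum).sigma)
    fun n => ?_)
  rw [← sum_antidiagonal_div_factorial_mul_pow, ← Finset.sum_coe_sort]
  exact hasSum_fintype _

/-- The coefficient of `u ^ p.1 * v ^ p.2` in the Taylor series of `(1 - x * u - y * v) ^ (-μ)`. -/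
noncomputable def doubleBinomialCoeff (μ x y : ℝ) (p : ℕ × ℕ) : ℝ :=
  (ascPochhammer ℝ (p.1 + p.2)).eval μ / (p.1.factorial * p.2.factorial) * x ^ p.1 * y ^ p.2

theorem hasSum_doubleBinomialCoeff (μ : ℝ) {x y : ℝ} (h : |x| + |y| < 1) :
    HasSum (doubleBinomialCoeff μ x y) ((1 - x - y) ^ (-μ)) := by
  rw [sub_sub]
  refine hasSum_div_factorial_mul_pow_mul_pow (a := fun n => (ascPochhammer ℝ n).eval μ) ?_
    (hasSum_ascPochhammer_mul_pow μ ((abs_add_le x y).trans_lt h))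
  exact (hasSum_ascPochhammer_mul_pow μ (by rwa [abs_of_nonneg (by positivity)])).summable

theorem doubleBinomialCoeff_mul_mul (μ x y u v : ℝ) (p : ℕ × ℕ) :
    doubleBinomialCoeff μ (x * u) (y * v) p =
      doubleBinomialCoeff μ x y p * (u ^ p.1 * v ^ p.2) := by
  simp only [doubleBinomialCoeff, mul_pow]
  ring

end BinomialSeries

/-! ### Termwise differentiation and integration -/

theorem norm_mul_natCast_mul_pow_sub_one_le (a : ℝ) (n : ℕ) {r r' u : ℝ} (hr : r < r')
    (hu : |u| ≤ r) : ‖a * (n * u ^ (n - 1))‖ ≤ |a| * r' ^ n / (r' - r) := by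
  have h0 : 0 ≤ r := (abs_nonneg u).trans hu
  have h := pow_add_mul_le_add_pow h0 (by linarith : 0 ≤ 2 * r + (r' - r)) n
  rw [add_sub_cancel] at h
  rw [norm_mul, norm_mul, norm_pow, norm_natCast, norm_eq_abs, norm_eq_abs,
    le_div_iff₀ (sub_pos.2 hr), mul_assoc]
  gcongr
  calc n * |u| ^ (n - 1) * (r' - r) ≤ n * r ^ (n - 1) * (r' - r) := by
        gcongr
    _ ≤ r' ^ n := by linarith [pow_nonneg h0 n]

/-- A power series may be differentiated term by term; the exponents `m i` need not be distinct,
so that series in several variables are covered one variable at a time. -/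
theorem hasSum_deriv_of_hasSum_mul_pow {ι : Type*} {c : ι → ℝ} {m : ι → ℕ} {f : ℝ → ℝ} {R : ℝ}
    (hf : ∀ u, |u| < R → HasSum (fun i => c i * u ^ m i) (f u)) {u : ℝ} (hu : |u| < R) :
    HasSum (fun i => c i * (m i * u ^ (m i - 1))) (deriv f u) := by
  obtain ⟨r, hur, hrR⟩ := exists_between hu
  obtain ⟨r', hrr', hr'R⟩ := exists_between hrR
  have h0 : 0 < r' := (abs_nonneg u).trans_lt (hur.trans hrr')
  have hbound : Summable fun i => |c i| * r' ^ m i / (r' - r) := by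
    have := (hf r' (by rwa [abs_of_pos h0])).summable.abs.div_const (r' - r)
    simpa only [abs_mul, abs_pow, abs_of_pos h0] using this
  have hle (i : ι) (w : ℝ) (hw : w ∈ Ioo (-r) r) :
      ‖c i * (m i * w ^ (m i - 1))‖ ≤ |c i| * r' ^ m i / (r' - r) :=
    norm_mul_natCast_mul_pow_sub_one_le _ _ hrr' (abs_lt.2 hw).le
  have hu' : u ∈ Ioo (-r) r := abs_lt.1 hur
  have hderiv : HasDerivAt (fun w => ∑' i, c i * w ^ m i) (∑' i, c i * (m i * u ^ (m i - 1))) u :=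
    hasDerivAt_tsum_of_isPreconnected hbound isOpen_Ioo isPreconnected_Ioo
      (fun i w _ => (hasDerivAt_pow (m i) w).const_mul (c i)) hle hu' (hf u hu).summable hu'
  have heq : f =ᶠ[nhds u] fun w => ∑' i, c i * w ^ m i := by
    filter_upwards [Ioo_mem_nhds hu'.1 hu'.2] with w hw
    exact (hf w ((abs_lt.2 hw).trans hrR)).tsum_eq.symm
  rw [(hderiv.congr_of_eventuallyEq heq).deriv]
  exact (Summable.of_norm_bounded hbound fun i => hle i u hu').hasSum

theorem hasSum_integral_mul {X ι : Type*} [MeasurableSpace X] {μ : Measure X} [Countable ι]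
    {c : ι → ℝ} {e : ι → X → ℝ} {f w : X → ℝ} (hc : Summable c)
    (he : ∀ i, AEStronglyMeasurable (e i) μ) (he1 : ∀ i, ∀ᵐ x ∂μ, |e i x| ≤ 1)
    (hw : Integrable w μ) (hf : ∀ᵐ x ∂μ, HasSum (fun i => c i * e i x) (f x)) :
    HasSum (fun i => c i * ∫ x, e i x * w x ∂μ) (∫ x, f x * w x ∂μ) := by
  simp only [← integral_const_mul]
  refine hasSum_integral_of_dominated_convergence (fun i x => |c i| * |w x|)
    (fun i => ((he i).mul hw.1).const_mul _) (fun i => ?_)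
    (.of_forall fun x => hc.abs.mul_right _) ?_ ?_
  · filter_upwards [he1 i] with x hx
    simp only [norm_mul, norm_eq_abs]
    gcongr
    exact mul_le_of_le_one_left (abs_nonneg _) hx
  · simp only [tsum_mul_right]
    exact hw.abs.const_mul _
  · filter_upwards [hf] with x hx
    simpa only [mul_assoc] using hx.mul_right (w x)

theorem hasSum_integral_integral_mul_pow {ι : Type*} [Countable ι] {σ τ : Measure ℝ}
    {c : ι → ℝ} {m n : ι → ℕ} {w z : ℝ → ℝ} {G : ℝ → ℝ → ℝ}
    (hσ : ∀ᵐ u ∂σ, |u| ≤ 1) (hτ : ∀ᵐ v ∂τ, |v| ≤ 1) (hw : Integrable w σ) (hz : Integrable z τ)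
    (hG : ∀ u v, |u| ≤ 1 → |v| ≤ 1 → HasSum (fun i => c i * (u ^ m i * v ^ n i)) (G u v)) :
    HasSum (fun i => c i * ((∫ u, u ^ m i * w u ∂σ) * ∫ v, v ^ n i * z v ∂τ))
      (∫ v, (∫ u, G u v * w u ∂σ) * z v ∂τ) := by
  have hpow {ρ : Measure ℝ} (hρ : ∀ᵐ u ∂ρ, |u| ≤ 1) (k : ℕ) : ∀ᵐ u ∂ρ, |u ^ k| ≤ 1 := by
    filter_upwards [hρ] with u hu
    rw [abs_pow]
    exact pow_le_one₀ (abs_nonneg u) hu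
  have hinner (v : ℝ) (hv : |v| ≤ 1) :
      HasSum (fun i => c i * (∫ u, u ^ m i * w u ∂σ) * v ^ n i) (∫ u, G u v * w u ∂σ) := by
    have hcv : Summable fun i => c i * v ^ n i := by
      simpa using (hG 1 v (by simp) hv).summable
    refine (hasSum_integral_mul (e := fun i u => u ^ m i) hcv (fun i => by fun_prop)
      (fun i => hpow hσ _) hw ?_).congr_fun fun i => by ring
    filter_upwards [hσ] with u hu
    exact (hG u v hu hv).congr_fun fun i => by ring
  have hmoments : Summable fun i => c i * ∫ u, u ^ m i * w u ∂σ := by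
    simpa using (hinner 1 (by simp)).summable
  simp only [← mul_assoc]
  refine hasSum_integral_mul hmoments (fun i => by fun_prop) (fun i => hpow hτ _) hz ?_
  filter_upwards [hτ] with v hv using hinner v hv

/-! ### The function `Π_γ` -/

/-- The constant normalizing `(1 - u ^ 2) ^ (γ - 1 / 2)` to a probability density on `[-1, 1]`
when `γ > -1 / 2`; for `-1 < γ < -1 / 2` it is negative. -/
noncomputable def piConst (γ : ℝ) : ℝ :=
  Real.Gamma (γ + 1) / (√π * Real.Gamma (γ + 1 / 2))

theorem one_sub_sq_pos_of_abs_lt_one {u : ℝ} (hu : |u| < 1) : 0 < 1 - u ^ 2 :=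
  sub_pos.2 ((sq_lt_one_iff_abs_lt_one u).2 hu)

theorem one_sub_sq_rpow_le {p q u : ℝ} (hq : q ≤ 0) (hqp : q ≤ p) (hu : |u| < 1) :
    (1 - u ^ 2) ^ p ≤ (1 - |u|) ^ q := by
  have hle : 1 - |u| ≤ 1 - u ^ 2 := by
    rw [← sq_abs]
    nlinarith [abs_nonneg u]
  calc (1 - u ^ 2) ^ p ≤ (1 - u ^ 2) ^ q :=
        rpow_le_rpow_of_exponent_ge (one_sub_sq_pos_of_abs_lt_one hu)
          (sub_le_self _ (sq_nonneg u)) hqp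
    _ ≤ (1 - |u|) ^ q := rpow_le_rpow_of_nonpos (sub_pos.2 hu) hle hq

theorem integrableOn_one_sub_abs_rpow {p : ℝ} (hp : -1 < p) :
    IntegrableOn (fun u : ℝ => (1 - |u|) ^ p) (Ioo (-1) 1) := by
  have hpos : IntegrableOn (fun u : ℝ => (1 - |u|) ^ p) (Ioc 0 1) := by
    have h := (intervalIntegral.intervalIntegrable_rpow' (a := 1) (b := 0) hp).comp_sub_left 1
    rw [sub_self, sub_zero, intervalIntegrable_iff_integrableOn_Ioc_of_le zero_le_one] at h
    exact h.congr_fun (fun u hu => by simp only [abs_of_pos hu.1]) measurableSet_Ioc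
  have hneg : IntegrableOn (fun u : ℝ => (1 - |u|) ^ p) (Ioc (-1) 0) := by
    have h := (intervalIntegral.intervalIntegrable_rpow' (a := 0) (b := 1) hp).comp_add_left 1
    rw [zero_sub, sub_self, intervalIntegrable_iff_integrableOn_Ioc_of_le (by norm_num)] at h
    exact h.congr_fun (fun u hu => by simp only [abs_of_nonpos hu.2, sub_neg_eq_add])
      measurableSet_Ioc
  refine (hneg.union hpos).mono_set ?_
  rw [Ioc_union_Ioc_eq_Ioc (by norm_num) zero_le_one]
  exact Ioo_subset_Ioc_self

theorem integrableOn_one_sub_sq_rpow {p : ℝ} (hp : -1 < p) :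
    IntegrableOn (fun u : ℝ => (1 - u ^ 2) ^ p) (Ioo (-1) 1) := by
  refine (integrableOn_one_sub_abs_rpow (lt_min hp neg_one_lt_zero)).mono'
    (by fun_prop : Measurable fun u : ℝ => (1 - u ^ 2) ^ p).aestronglyMeasurable ?_
  filter_upwards [ae_restrict_mem measurableSet_Ioo] with u hu
  have hu' : |u| < 1 := abs_lt.2 hu
  rw [norm_of_nonneg (rpow_nonneg (one_sub_sq_pos_of_abs_lt_one hu').le _)]
  exact one_sub_sq_rpow_le (min_le_right p 0) (min_le_left p 0) hu'

theorem hasDerivAt_PiFun (γ : ℝ) {u : ℝ} (hu : |u| < 1) :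
    HasDerivAt (PiFun γ) (piConst γ * (1 - u ^ 2) ^ (γ - 1 / 2)) u := by
  have hc (w : ℝ) (hw : |w| < 1) : ContinuousAt (fun w : ℝ => (1 - w ^ 2) ^ (γ - 1 / 2)) w :=
    ContinuousAt.rpow_const (by fun_prop) (.inl (one_sub_sq_pos_of_abs_lt_one hw).ne')
  refine HasDerivAt.const_mul _ (intervalIntegral.integral_hasDerivAt_right ?_ ?_ (hc u hu))
  · refine ContinuousOn.intervalIntegrable fun w hw => (hc w ?_).continuousWithinAt
    exact abs_lt.2 ((convex_Ioo (-1 : ℝ) 1).ordConnected.uIcc_subset (by simp) (abs_lt.1 hu) hw)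
  · exact (by fun_prop : StronglyMeasurable fun w : ℝ => (1 - w ^ 2) ^ (γ - 1 / 2))
      |>.stronglyMeasurableAtFilter

theorem PiFun_neg (γ u : ℝ) : PiFun γ (-u) = -PiFun γ u := by
  have h := intervalIntegral.integral_comp_neg (a := 0) (b := u)
    (fun w : ℝ => (1 - w ^ 2) ^ (γ - 1 / 2))
  simp only [neg_sq, neg_zero] at h
  rw [PiFun, PiFun, h, intervalIntegral.integral_symm, mul_neg]

theorem integral_one_sub_rpow {p u : ℝ} (hp : p ≠ -1) (hu : u < 1) :
    ∫ w in (0 : ℝ)..u, (1 - w) ^ p = (1 - (1 - u) ^ (p + 1)) / (p + 1) := by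
  have h0 : (0 : ℝ) ∉ uIcc (1 - u) 1 := notMem_uIcc_of_lt (sub_pos.2 hu) one_pos
  rw [intervalIntegral.integral_comp_sub_left (fun w => w ^ p), sub_zero,
    integral_rpow (.inr ⟨hp, h0⟩), one_rpow]

theorem intervalIntegrable_one_sub_rpow (p : ℝ) {u : ℝ} (hu : u < 1) :
    IntervalIntegrable (fun w : ℝ => (1 - w) ^ p) volume 0 u := by
  refine ContinuousOn.intervalIntegrable fun w hw => ?_
  have hw1 : w < 1 := hw.2.trans_lt (max_lt one_pos hu)
  exact (ContinuousAt.rpow_const (by fun_prop) (.inl (sub_pos.2 hw1).ne')).continuousWithinAt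

theorem abs_integral_one_sub_sq_rpow_le {p u : ℝ} (hp : -(3 / 2) ≤ p) (hu0 : 0 ≤ u) (hu : u < 1) :
    |∫ w in (0 : ℝ)..u, (1 - w ^ 2) ^ p| ≤ 2 * (1 - u) ^ (-(1 / 2) : ℝ) := by
  have hle (w : ℝ) (hw : w ∈ Ioc 0 u) : ‖(1 - w ^ 2) ^ p‖ ≤ (1 - w) ^ (-(3 / 2) : ℝ) := by
    have hw1 : |w| < 1 := by rw [abs_of_pos hw.1]; exact hw.2.trans_lt hu
    rw [norm_of_nonneg (rpow_nonneg (one_sub_sq_pos_of_abs_lt_one hw1).le _)]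
    simpa only [abs_of_pos hw.1] using one_sub_sq_rpow_le (by norm_num) hp hw1
  calc |∫ w in (0 : ℝ)..u, (1 - w ^ 2) ^ p|
      ≤ ∫ w in (0 : ℝ)..u, (1 - w) ^ (-(3 / 2) : ℝ) :=
        intervalIntegral.norm_integral_le_of_norm_le hu0 (.of_forall hle)
          (intervalIntegrable_one_sub_rpow _ hu)
    _ = 2 * (1 - u) ^ (-(1 / 2) : ℝ) - 2 := by
        rw [integral_one_sub_rpow (by norm_num) hu,
          show (-(3 / 2) + 1 : ℝ) = -(1 / 2) by norm_num]
        ring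
    _ ≤ 2 * (1 - u) ^ (-(1 / 2) : ℝ) := sub_le_self _ two_pos.le

theorem abs_PiFun_le {γ u : ℝ} (hγ : -1 ≤ γ) (hu : |u| < 1) :
    |PiFun γ u| ≤ |piConst γ| * (2 * (1 - |u|) ^ (-(1 / 2) : ℝ)) := by
  have hodd : |PiFun γ u| = |PiFun γ (|u|)| := by
    rcases abs_choice u with h | h <;> rw [h]
    rw [PiFun_neg, abs_neg]
  rw [hodd, PiFun, abs_mul]
  exact mul_le_mul_of_nonneg_left
    (abs_integral_one_sub_sq_rpow_le (by linarith) (abs_nonneg u) hu) (abs_nonneg _)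

theorem integrableOn_PiFun {γ : ℝ} (hγ : -1 ≤ γ) : IntegrableOn (PiFun γ) (Ioo (-1) 1) := by
  refine (((integrableOn_one_sub_abs_rpow (p := -(1 / 2)) (by norm_num)).const_mul 2).const_mul
    |piConst γ|).mono' ?_ ?_
  · exact ContinuousOn.aestronglyMeasurable (fun u hu =>
      (hasDerivAt_PiFun γ (abs_lt.2 hu)).continuousAt.continuousWithinAt) measurableSet_Ioo
  · filter_upwards [ae_restrict_mem measurableSet_Ioo] with u hu
    exact abs_PiFun_le hγ (abs_lt.2 hu)

/-! ### Moments -/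

theorem integrable_PiMeas_neg_half (f : ℝ → ℝ) : Integrable f (PiMeas (-(1 / 2))) := by
  rw [PiMeas, if_pos rfl]
  exact ((integrable_dirac (by simp)).add_measure (integrable_dirac (by simp))).smul_measure
    (by simp)

theorem integral_PiMeas_neg_half (f : ℝ → ℝ) :
    ∫ u, f u ∂(PiMeas (-(1 / 2))) = (f (-1) + f 1) / 2 := by
  rw [PiMeas, if_pos rfl, integral_smul_measure, integral_add_measure
    (integrable_dirac (by simp)) (integrable_dirac (by simp)), integral_dirac, integral_dirac]
  simp only [ENNReal.toReal_inv, ENNReal.toReal_ofNat, smul_eq_mul]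
  ring

theorem ae_PiMeas_neg_half_abs_le_one : ∀ᵐ u ∂(PiMeas (-(1 / 2))), |u| ≤ 1 := by
  rw [PiMeas, if_pos rfl]
  refine Measure.ae_smul_measure (ae_add_measure_iff.2 ⟨?_, ?_⟩) _ <;>
    exact ae_dirac_iff (measurableSet_le (by fun_prop) (by fun_prop)) |>.2 (by simp)

/-- The value at `u ^ j` of the functional `f ↦ ∫ f dΠ_{-1/2} - ∫ f' Π_γ`, which for
`γ > -1 / 2` is `f ↦ ∫ f dΠ_γ` after an integration by parts. -/
noncomputable def jacobiMoment (γ : ℝ) (j : ℕ) : ℝ :=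
  ∫ u, u ^ j ∂(PiMeas (-(1 / 2))) - j * ∫ u in Ioo (-1 : ℝ) 1, u ^ (j - 1) * PiFun γ u

theorem integral_Ioo_eq_zero_of_odd {f : ℝ → ℝ} (hf : ∀ u, f (-u) = -f u) (a : ℝ) :
    ∫ u in Ioo (-a) a, f u = 0 := by
  have h := integral_neg_eq_self ((Ioo (-a) a).indicator f) volume
  have hneg (u : ℝ) : (Ioo (-a) a).indicator f (-u) = -(Ioo (-a) a).indicator f u := by
    have hmem : -u ∈ Ioo (-a) a ↔ u ∈ Ioo (-a) a := by
      simp only [mem_Ioo, neg_lt_neg_iff, neg_lt, and_comm]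
    by_cases hu : u ∈ Ioo (-a) a <;> simp [indicator, hmem, hu, hf]
  simp only [hneg, integral_neg, integral_indicator measurableSet_Ioo] at h
  linarith

theorem jacobiMoment_of_odd (γ : ℝ) {j : ℕ} (hj : Odd j) : jacobiMoment γ j = 0 := by
  have hodd : ∫ u in Ioo (-1 : ℝ) 1, u ^ (j - 1) * PiFun γ u = 0 :=
    integral_Ioo_eq_zero_of_odd (fun u => by
      rw [(Nat.Odd.sub_odd hj odd_one).neg_pow, PiFun_neg, mul_neg]) 1
  rw [jacobiMoment, integral_PiMeas_neg_half, hodd, hj.neg_one_pow]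
  norm_num

theorem integrableOn_pow_mul {w : ℝ → ℝ} (hw : IntegrableOn w (Ioo (-1) 1)) (n : ℕ) :
    IntegrableOn (fun u => u ^ n * w u) (Ioo (-1) 1) := by
  refine Integrable.bdd_mul (c := 1) hw (by fun_prop) ?_
  filter_upwards [ae_restrict_mem measurableSet_Ioo] with u hu
  rw [norm_pow]
  exact pow_le_one₀ (norm_nonneg _) (abs_lt.2 hu).le

theorem abs_one_sub_sq_mul_PiFun_le {γ u : ℝ} (hγ : -1 ≤ γ) (hu : |u| < 1) :
    |(1 - u ^ 2) * PiFun γ u| ≤ 4 * |piConst γ| * √(1 - |u|) := by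
  have h1 : 0 < 1 - |u| := sub_pos.2 hu
  have hsq : 1 - u ^ 2 = (1 + |u|) * (1 - |u|) := by rw [← sq_abs]; ring
  have hsqrt : (1 - |u|) * (1 - |u|) ^ (-(1 / 2) : ℝ) = √(1 - |u|) := by
    rw [sqrt_eq_rpow, ← rpow_one_add' h1.le (by norm_num)]
    norm_num
  calc |(1 - u ^ 2) * PiFun γ u|
      ≤ (1 + |u|) * (1 - |u|) * (|piConst γ| * (2 * (1 - |u|) ^ (-(1 / 2) : ℝ))) := by
        rw [abs_mul, hsq, abs_of_nonneg (by positivity)]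
        gcongr
        exact abs_PiFun_le hγ hu
    _ = 2 * (1 + |u|) * |piConst γ| * √(1 - |u|) := by rw [← hsqrt]; ring
    _ ≤ 4 * |piConst γ| * √(1 - |u|) := by
        gcongr
        linarith

theorem integral_eq_zero_of_hasDerivAt_of_abs_le {f f' : ℝ → ℝ} {C : ℝ}
    (hderiv : ∀ u, |u| < 1 → HasDerivAt f (f' u) u) (hf' : IntegrableOn f' (Ioo (-1) 1))
    (hle : ∀ u, |u| < 1 → |f u| ≤ C * √(1 - |u|)) : ∫ u in Ioo (-1 : ℝ) 1, f' u = 0 := by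
  have hlim (a : ℝ) (ha : |a| = 1) :
      Filter.Tendsto (fun u : ℝ => C * √(1 - |u|)) (nhds a) (nhds 0) := by
    have hc : Continuous fun u : ℝ => C * √(1 - |u|) := by fun_prop
    simpa [ha] using hc.tendsto a
  have hIoo (u : ℝ) (hu : u ∈ Ioo (-1 : ℝ) 1) : ‖f u‖ ≤ C * √(1 - |u|) := hle u (abs_lt.2 hu)
  have h := intervalIntegral.integral_eq_sub_of_hasDerivAt_of_tendsto
    (neg_one_lt_zero.trans one_pos) (fun u hu => hderiv u (abs_lt.2 hu))
    ((intervalIntegrable_iff_integrableOn_Ioo_of_le (by norm_num)).2 hf')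
    (squeeze_zero_norm' (Filter.mem_of_superset (Ioo_mem_nhdsGT (by norm_num)) hIoo)
      ((hlim (-1) (by simp)).mono_left nhdsWithin_le_nhds))
    (squeeze_zero_norm' (Filter.mem_of_superset (Ioo_mem_nhdsLT (by norm_num)) hIoo)
      ((hlim 1 (by simp)).mono_left nhdsWithin_le_nhds))
  rwa [sub_zero, intervalIntegral.integral_of_le (by norm_num), integral_Ioc_eq_integral_Ioo] at h

theorem hasDerivAt_pow_mul_one_sub_sq_mul_PiFun (γ : ℝ) (n : ℕ) {u : ℝ} (hu : |u| < 1) :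
    HasDerivAt (fun u => u ^ n * ((1 - u ^ 2) * PiFun γ u))
      (n * (u ^ (n - 1) * PiFun γ u) - (n + 2 : ℕ) * (u ^ (n + 1) * PiFun γ u) +
        piConst γ * (u ^ n * (1 - u ^ 2) ^ (γ + 1 / 2))) u := by
  have hrpow : (1 - u ^ 2) ^ (γ + 1 / 2) = (1 - u ^ 2) ^ (γ - 1 / 2) * (1 - u ^ 2) := by
    rw [← rpow_add_one (one_sub_sq_pos_of_abs_lt_one hu).ne']
    ring_nf
  refine ((hasDerivAt_pow n u).mul
    (((hasDerivAt_pow 2 u).const_sub 1).mul (hasDerivAt_PiFun γ hu))).congr_deriv ?_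
  rw [hrpow]
  rcases n with _ | n <;>
  · simp only [Pi.mul_apply, Nat.add_sub_cancel]
    push_cast
    ring

theorem jacobiMoment_sub_jacobiMoment_add_two {γ : ℝ} (hγ : -1 ≤ γ) (n : ℕ) :
    jacobiMoment γ n - jacobiMoment γ (n + 2) =
      piConst γ * ∫ u in Ioo (-1 : ℝ) 1, u ^ n * (1 - u ^ 2) ^ (γ + 1 / 2) := by
  have hP (k : ℕ) := integrableOn_pow_mul (integrableOn_PiFun hγ) k
  have hW := integrableOn_pow_mul (integrableOn_one_sub_sq_rpow (p := γ + 1 / 2) (by linarith)) n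
  have hA := (hP (n - 1)).const_mul (n : ℝ)
  have hB := (hP (n + 1)).const_mul ((n + 2 : ℕ) : ℝ)
  have hAB : IntegrableOn (fun u => n * (u ^ (n - 1) * PiFun γ u) -
      (n + 2 : ℕ) * (u ^ (n + 1) * PiFun γ u)) (Ioo (-1) 1) := hA.sub hB
  have hzero := integral_eq_zero_of_hasDerivAt_of_abs_le (C := 4 * |piConst γ|)
    (fun u hu => hasDerivAt_pow_mul_one_sub_sq_mul_PiFun γ n hu)
    (hAB.add (hW.const_mul (piConst γ))) fun u hu => by
      rw [abs_mul, abs_pow]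
      exact (mul_le_of_le_one_left (abs_nonneg _) (pow_le_one₀ (abs_nonneg u) hu.le)).trans
        (abs_one_sub_sq_mul_PiFun_le hγ hu)
  rw [integral_add hAB (hW.const_mul _), integral_sub hA hB] at hzero
  simp only [integral_const_mul] at hzero
  simp only [jacobiMoment, integral_PiMeas_neg_half, pow_add, neg_one_sq, one_pow, mul_one,
    show n + 2 - 1 = n + 1 by omega]
  simp only [pow_add, pow_one] at hzero ⊢
  linarith

theorem integral_Ioo_rpow_mul_one_sub_rpow {a b : ℝ} (ha : 0 < a) (hb : 0 < b) :
    ∫ x in Ioo (0 : ℝ) 1, x ^ (a - 1) * (1 - x) ^ (b - 1) = ProbabilityTheory.beta a b := by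
  have hcast (x : ℝ) (hx : x ∈ Ioo (0 : ℝ) 1) : (x : ℂ) ^ ((a : ℂ) - 1) *
      (1 - (x : ℂ)) ^ ((b : ℂ) - 1) = ((x ^ (a - 1) * (1 - x) ^ (b - 1) : ℝ) : ℂ) := by
    rw [Complex.ofReal_mul, Complex.ofReal_cpow hx.1.le, Complex.ofReal_cpow (sub_pos.2 hx.2).le]
    push_cast
    rfl
  rw [ProbabilityTheory.beta_eq_betaIntegralReal _ _ ha hb, Complex.betaIntegral,
    intervalIntegral.integral_of_le zero_le_one, integral_Ioc_eq_integral_Ioo,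
    setIntegral_congr_fun measurableSet_Ioo hcast]
  exact (congrArg Complex.re integral_complex_ofReal).symm

theorem integral_Ioo_abs_mul_comp_sq (g : ℝ → ℝ) :
    ∫ u in Ioo (-1 : ℝ) 1, |u| * g (u ^ 2) = ∫ x in Ioo (0 : ℝ) 1, g x := by
  set G : ℝ → ℝ := (Iio 1).indicator g
  have hG (u : ℝ) : (Ioo (-1) 1).indicator (fun u => |u| * g (u ^ 2)) u = |u| * G (|u| ^ 2) := by
    have hmem : u ∈ Ioo (-1 : ℝ) 1 ↔ |u| ^ 2 ∈ Iio (1 : ℝ) := by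
      rw [sq_abs, mem_Iio, sq_lt_one_iff_abs_lt_one, abs_lt, mem_Ioo]
    by_cases hu : |u| ^ 2 ∈ Iio (1 : ℝ)
    · rw [indicator_of_mem (hmem.2 hu), show G _ = _ from indicator_of_mem hu g, sq_abs]
    · rw [indicator_of_notMem fun h => hu (hmem.1 h), show G _ = _ from indicator_of_notMem hu g,
        mul_zero]
  calc ∫ u in Ioo (-1 : ℝ) 1, |u| * g (u ^ 2)
      = ∫ u, |u| * G (|u| ^ 2) := by
        rw [← integral_indicator measurableSet_Ioo]
        simp only [hG]
    _ = ∫ u in Ioi 0, (2 * u ^ ((2 : ℝ) - 1)) • G (u ^ (2 : ℝ)) := by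
        rw [integral_comp_abs (f := fun r => r * G (r ^ 2)), ← integral_const_mul]
        norm_num [mul_assoc]
    _ = ∫ x in Ioi 0, G x := integral_comp_rpow_Ioi_of_pos two_pos
    _ = ∫ x in Ioo (0 : ℝ) 1, g x := by
        rw [setIntegral_indicator measurableSet_Iio, Ioi_inter_Iio]

theorem integral_pow_two_mul_mul_one_sub_sq_rpow (m : ℕ) {p : ℝ} (hp : -1 < p) :
    ∫ u in Ioo (-1 : ℝ) 1, u ^ (2 * m) * (1 - u ^ 2) ^ p =
      ProbabilityTheory.beta (1 / 2 + m) (p + 1) := by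
  rw [← integral_Ioo_rpow_mul_one_sub_rpow (by positivity) (by linarith),
    ← integral_Ioo_abs_mul_comp_sq]
  refine setIntegral_congr_ae measurableSet_Ioo ?_
  filter_upwards [volume.ae_ne (0 : ℝ)] with u hu _
  have hpow : |u| * (u ^ 2) ^ (1 / 2 + (m : ℝ) - 1) = u ^ (2 * m) := by
    rw [pow_mul, ← sqrt_sq_eq_abs, sqrt_eq_rpow, ← rpow_add (by positivity),
      ← rpow_natCast (u ^ 2) m]
    ring_nf
  rw [← mul_assoc, hpow, add_sub_cancel_right]

theorem Gamma_add_natCast_eq_ascPochhammer_mul {x : ℝ} (hx : 0 < x) (n : ℕ) :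
    Real.Gamma (x + n) = (ascPochhammer ℝ n).eval x * Real.Gamma x := by
  induction n with
  | zero => simp
  | succ n ih =>
    rw [Nat.cast_succ, ← add_assoc, Real.Gamma_add_one (by positivity), ih,
      ascPochhammer_succ_eval]
    ring

theorem ascPochhammer_eval_two_mul (x : ℝ) (n : ℕ) :
    (ascPochhammer ℝ (2 * n)).eval x =
      4 ^ n * (ascPochhammer ℝ n).eval (x / 2) * (ascPochhammer ℝ n).eval ((x + 1) / 2) := by
  induction n with
  | zero => simp
  | succ n ih =>
    rw [mul_add_one, ascPochhammer_succ_eval, ascPochhammer_succ_eval, ih,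
      ascPochhammer_succ_eval, ascPochhammer_succ_eval]
    push_cast
    ring

theorem factorial_two_mul_eq_ascPochhammer (n : ℕ) :
    ((2 * n).factorial : ℝ) = 4 ^ n * (ascPochhammer ℝ n).eval (1 / 2) * n.factorial := by
  have h := ascPochhammer_eval_two_mul 1 n
  rwa [ascPochhammer_eval_one, one_add_one_eq_two, div_self two_ne_zero,
    ascPochhammer_eval_one] at h

theorem piConst_mul_beta {γ : ℝ} (hγ : -1 < γ) (hγ' : γ ≠ -(1 / 2)) (m : ℕ) :
    piConst γ * ProbabilityTheory.beta (1 / 2 + m) (γ + 1 / 2 + 1) =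
      (γ + 1 / 2) * (ascPochhammer ℝ m).eval (1 / 2) /
        (ascPochhammer ℝ (m + 1)).eval (γ + 1) := by
  have hhalf : γ + 1 / 2 ≠ 0 := fun h => hγ' (by linarith)
  have hΓ := Real.Gamma_add_one hhalf
  have hΓ0 : Real.Gamma (γ + 1 / 2) ≠ 0 := fun h =>
    (Real.Gamma_pos_of_pos (show 0 < γ + 1 / 2 + 1 by linarith)).ne' (by rw [hΓ, h, mul_zero])
  have hΓ1 := (Real.Gamma_pos_of_pos (show 0 < γ + 1 by linarith)).ne'
  have hP := (ascPochhammer_pos (S := ℝ) (m + 1) (γ + 1) (by linarith)).ne'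
  have hsum : 1 / 2 + (m : ℝ) + (γ + 1 / 2 + 1) = γ + 1 + (m + 1 : ℕ) := by push_cast; ring
  rw [piConst, ProbabilityTheory.beta, hsum, hΓ,
    Gamma_add_natCast_eq_ascPochhammer_mul (by norm_num),
    Gamma_add_natCast_eq_ascPochhammer_mul (by linarith), Real.Gamma_one_half_eq]
  generalize Real.Gamma (γ + 1 / 2) = G at hΓ0 ⊢
  field_simp

theorem jacobiMoment_two_mul {γ : ℝ} (hγ : -1 < γ) (hγ' : γ ≠ -(1 / 2)) (m : ℕ) :
    jacobiMoment γ (2 * m) =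
      (ascPochhammer ℝ m).eval (1 / 2) / (ascPochhammer ℝ m).eval (γ + 1) := by
  induction m with
  | zero =>
    rw [mul_zero, jacobiMoment, integral_PiMeas_neg_half]
    simp
  | succ m ih =>
    have hrec := jacobiMoment_sub_jacobiMoment_add_two hγ.le (2 * m)
    rw [integral_pow_two_mul_mul_one_sub_sq_rpow m (by linarith), piConst_mul_beta hγ hγ'] at hrec
    have hP := (ascPochhammer_pos (S := ℝ) m (γ + 1) (by linarith)).ne'
    have hm : γ + 1 + m ≠ 0 := by
      have := m.cast_nonneg (α := ℝ)
      linarith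
    rw [mul_add_one, ← sub_sub_cancel (jacobiMoment γ (2 * m)) (jacobiMoment γ (2 * m + 2)), hrec,
      ih, ascPochhammer_succ_eval, ascPochhammer_succ_eval]
    field_simp
    ring

theorem doubleBinomialCoeff_mul_jacobiMoment {α β : ℝ} (hα : -1 < α) (hα' : α ≠ -(1 / 2))
    (hβ : -1 < β) (hβ' : β ≠ -(1 / 2)) (μ x y : ℝ) (p : ℕ × ℕ) :
    doubleBinomialCoeff μ x y (2 * p.1, 2 * p.2) *
        (jacobiMoment α (2 * p.1) * jacobiMoment β (2 * p.2)) =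
      (Polynomial.eval (μ / 2) (ascPochhammer ℝ (p.1 + p.2)) *
        Polynomial.eval ((μ + 1) / 2) (ascPochhammer ℝ (p.1 + p.2))) /
      (Polynomial.eval (α + 1) (ascPochhammer ℝ p.1) *
        Polynomial.eval (β + 1) (ascPochhammer ℝ p.2) *
        (Nat.factorial p.1) * (Nat.factorial p.2)) * (x ^ 2) ^ p.1 * (y ^ 2) ^ p.2 := by
  have h1 := (ascPochhammer_pos (S := ℝ) p.1 (1 / 2) (by norm_num)).ne'
  have h2 := (ascPochhammer_pos (S := ℝ) p.2 (1 / 2) (by norm_num)).ne'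
  rw [doubleBinomialCoeff, jacobiMoment_two_mul hα hα', jacobiMoment_two_mul hβ hβ', ← mul_add,
    ascPochhammer_eval_two_mul, factorial_two_mul_eq_ascPochhammer,
    factorial_two_mul_eq_ascPochhammer, pow_add, pow_mul, pow_mul]
  field_simp

theorem tsum_doubleBinomialCoeff_mul_jacobiMoment {α β : ℝ} (hα : -1 < α) (hα' : α ≠ -(1 / 2))
    (hβ : -1 < β) (hβ' : β ≠ -(1 / 2)) (μ x y : ℝ) :
    ∑' p : ℕ × ℕ, doubleBinomialCoeff μ x y p * (jacobiMoment α p.1 * jacobiMoment β p.2) =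
      F4 (μ / 2) ((μ + 1) / 2) (α + 1) (β + 1) (x ^ 2) (y ^ 2) := by
  have hinj : Function.Injective fun p : ℕ × ℕ => (2 * p.1, 2 * p.2) := fun p q h => by
    simpa [Prod.ext_iff] using h
  rw [← hinj.tsum_eq, F4]
  · exact tsum_congr (doubleBinomialCoeff_mul_jacobiMoment hα hα' hβ hβ' μ x y)
  · rintro ⟨j, l⟩ hne
    by_contra hnot
    refine hne ?_
    have hodd : Odd j ∨ Odd l := by
      by_contra! h
      simp only [Nat.not_odd_iff_even, even_iff_exists_two_mul] at h
      obtain ⟨⟨m, rfl⟩, n, rfl⟩ := h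
      exact hnot ⟨(m, n), rfl⟩
    rcases hodd with h | h <;> simp [jacobiMoment_of_odd _ h]

/-! ### The Jacobi–Poisson kernel -/

/-- The functional `F ↦ ∫ ∫ F(u, v) dΠ_α(u) dΠ_β(v)`, continued to parameters below `-1 / 2`
by integrating by parts in each variable: in one variable,
`∫ f dΠ_γ` becomes `∫ f dΠ_{-1/2} - ∫ f' Π_γ`. -/
noncomputable def jacobiFunctional (α β : ℝ) (F : ℝ → ℝ → ℝ) : ℝ :=
  (∫ v in Ioo (-1 : ℝ) 1, (∫ u in Ioo (-1 : ℝ) 1,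
      (deriv (fun u' => deriv (fun v' => F u' v') v) u) * PiFun α u) * PiFun β v)
  + (∫ v, (∫ u in Ioo (-1 : ℝ) 1,
      (-(deriv (fun u' => F u' v) u)) * PiFun α u) ∂(PiMeas (-(1 / 2))))
  + (∫ v in Ioo (-1 : ℝ) 1,
      (∫ u, (-(deriv (fun v' => F u v') v)) ∂(PiMeas (-(1 / 2)))) * PiFun β v)
  + ∫ v, (∫ u, F u v ∂(PiMeas (-(1 / 2)))) ∂(PiMeas (-(1 / 2)))

section DoublePowerSeries

variable {c : ℕ × ℕ → ℝ} {F : ℝ → ℝ → ℝ} {R : ℝ}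

theorem hasSum_deriv_left_of_hasSum_mul_pow_mul_pow
    (hF : ∀ u v, |u| < R → |v| < R → HasSum (fun p => c p * (u ^ p.1 * v ^ p.2)) (F u v))
    {u v : ℝ} (hu : |u| < R) (hv : |v| < R) :
    HasSum (fun p => c p * p.1 * (u ^ (p.1 - 1) * v ^ p.2)) (deriv (fun u' => F u' v) u) := by
  refine (hasSum_deriv_of_hasSum_mul_pow (c := fun p => c p * v ^ p.2) (m := Prod.fst)
    (fun u' hu' => ?_) hu).congr_fun fun p => by ring
  exact (hF u' v hu' hv).congr_fun fun p => by ring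

theorem hasSum_deriv_right_of_hasSum_mul_pow_mul_pow
    (hF : ∀ u v, |u| < R → |v| < R → HasSum (fun p => c p * (u ^ p.1 * v ^ p.2)) (F u v))
    {u v : ℝ} (hu : |u| < R) (hv : |v| < R) :
    HasSum (fun p => c p * p.2 * (u ^ p.1 * v ^ (p.2 - 1))) (deriv (fun v' => F u v') v) := by
  refine (hasSum_deriv_of_hasSum_mul_pow (c := fun p => c p * u ^ p.1) (m := Prod.snd)
    (fun v' hv' => ?_) hv).congr_fun fun p => by ring
  exact (hF u v' hu hv').congr_fun fun p => by ring

theorem hasSum_deriv_deriv_of_hasSum_mul_pow_mul_pow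
    (hF : ∀ u v, |u| < R → |v| < R → HasSum (fun p => c p * (u ^ p.1 * v ^ p.2)) (F u v))
    {u v : ℝ} (hu : |u| < R) (hv : |v| < R) :
    HasSum (fun p => c p * p.1 * p.2 * (u ^ (p.1 - 1) * v ^ (p.2 - 1)))
      (deriv (fun u' => deriv (fun v' => F u' v') v) u) := by
  refine (hasSum_deriv_of_hasSum_mul_pow (c := fun p => c p * p.2 * v ^ (p.2 - 1))
    (m := Prod.fst) (fun u' hu' => ?_) hu).congr_fun fun p => by ring
  exact (hasSum_deriv_right_of_hasSum_mul_pow_mul_pow hF hu' hv).congr_fun fun p => by ring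

theorem hasSum_jacobiFunctional {α β : ℝ} (hα : -1 ≤ α) (hβ : -1 ≤ β) (hR : 1 < R)
    (hF : ∀ u v, |u| < R → |v| < R → HasSum (fun p => c p * (u ^ p.1 * v ^ p.2)) (F u v)) :
    HasSum (fun p => c p * (jacobiMoment α p.1 * jacobiMoment β p.2))
      (jacobiFunctional α β F) := by
  have hIoo : ∀ᵐ u ∂volume.restrict (Ioo (-1 : ℝ) 1), |u| ≤ 1 := by
    filter_upwards [ae_restrict_mem measurableSet_Ioo] with u hu using (abs_lt.2 hu).le
  have hδ := ae_PiMeas_neg_half_abs_le_one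
  have hα' := integrableOn_PiFun hα
  have hβ' := integrableOn_PiFun hβ
  have hone : Integrable (fun _ => (1 : ℝ)) (PiMeas (-(1 / 2))) := integrable_PiMeas_neg_half _
  have huv := hasSum_integral_integral_mul_pow hIoo hIoo hα' hβ' fun u v hu hv =>
    hasSum_deriv_deriv_of_hasSum_mul_pow_mul_pow hF (hu.trans_lt hR) (hv.trans_lt hR)
  have hu := hasSum_integral_integral_mul_pow hIoo hδ hα' hone fun u v hu hv =>
    hasSum_deriv_left_of_hasSum_mul_pow_mul_pow hF (hu.trans_lt hR) (hv.trans_lt hR)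
  have hv := hasSum_integral_integral_mul_pow hδ hIoo hone hβ' fun u v hu hv =>
    hasSum_deriv_right_of_hasSum_mul_pow_mul_pow hF (hu.trans_lt hR) (hv.trans_lt hR)
  have h := hasSum_integral_integral_mul_pow hδ hδ hone hone fun u v hu hv =>
    hF u v (hu.trans_lt hR) (hv.trans_lt hR)
  simp only [mul_one] at hu hv h
  simp only [jacobiFunctional, neg_mul, integral_neg]
  refine (((huv.add hu.neg).add hv.neg).add h).congr_fun fun p => ?_
  simp only [jacobiMoment]
  ring

end DoublePowerSeries

theorem abs_mul_add_abs_mul_le_one {a b c d : ℝ} (hab : a ^ 2 + b ^ 2 = 1)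
    (hcd : c ^ 2 + d ^ 2 = 1) : |a * c| + |b * d| ≤ 1 := by
  rw [abs_mul, abs_mul]
  linarith [two_mul_le_add_sq |a| |c|, two_mul_le_add_sq |b| |d|, sq_abs a, sq_abs b, sq_abs c,
    sq_abs d]

theorem abs_sin_mul_sin_div_cosh_add_abs_cos_mul_cos_div_cosh_lt_one {s : ℝ} (hs : s ≠ 0)
    (θ φ : ℝ) :
    |Real.sin θ * Real.sin φ / Real.cosh s| + |Real.cos θ * Real.cos φ / Real.cosh s| < 1 := by
  rw [abs_div, abs_div, abs_of_pos (Real.cosh_pos s), ← add_div, div_lt_one (Real.cosh_pos s)]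
  exact (abs_mul_add_abs_mul_le_one (sin_sq_add_cos_sq θ) (sin_sq_add_cos_sq φ)).trans_lt
    (Real.one_lt_cosh.2 hs)

theorem Psi_eq_mul_one_sub_sub_rpow (α β t θ φ : ℝ) {u v : ℝ}
    (h : |Real.sin (θ / 2) * Real.sin (φ / 2) / Real.cosh (t / 2) * u| +
      |Real.cos (θ / 2) * Real.cos (φ / 2) / Real.cosh (t / 2) * v| < 1) :
    Psi α β t θ φ u v =
      cab α β * Real.sinh (t / 2) / Real.cosh (t / 2) ^ (α + β + 2) *
        (1 - Real.sin (θ / 2) * Real.sin (φ / 2) / Real.cosh (t / 2) * u -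
          Real.cos (θ / 2) * Real.cos (φ / 2) / Real.cosh (t / 2) * v) ^ (-(α + β + 2)) := by
  have hC := Real.cosh_pos (t / 2)
  set x := Real.sin (θ / 2) * Real.sin (φ / 2) / Real.cosh (t / 2) with hx
  set y := Real.cos (θ / 2) * Real.cos (φ / 2) / Real.cosh (t / 2) with hy
  have hfactor : Real.cosh (t / 2) - 1 + qf θ φ u v = Real.cosh (t / 2) * (1 - x * u - y * v) := by
    rw [qf, hx, hy]
    field_simp
    ring
  have hpos : 0 ≤ 1 - x * u - y * v := by linarith [le_abs_self (x * u), le_abs_self (y * v)]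
  rw [Psi, hfactor, mul_rpow hC.le hpos, rpow_neg hpos, div_mul_eq_div_div, div_eq_mul_inv]

theorem exists_one_lt_mul_lt_one {s : ℝ} (hs0 : 0 ≤ s) (hs : s < 1) : ∃ R, 1 < R ∧ R * s < 1 := by
  refine ⟨2 / (1 + s), (one_lt_div (by linarith)).2 (by linarith), ?_⟩
  rw [div_mul_eq_mul_div, div_lt_one (by linarith)]
  linarith

theorem hasSum_const_mul_doubleBinomialCoeff_mul_pow_mul_pow (A μ : ℝ) {x y u v : ℝ}
    (h : |x * u| + |y * v| < 1) :
    HasSum (fun p => A * doubleBinomialCoeff μ x y p * (u ^ p.1 * v ^ p.2))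
      (A * (1 - x * u - y * v) ^ (-μ)) :=
  ((hasSum_doubleBinomialCoeff μ h).mul_left A).congr_fun fun p => by
    rw [doubleBinomialCoeff_mul_mul, mul_assoc]

theorem jacobiFunctional_eq_mul_F4 {α β : ℝ} (hα : -1 < α) (hα' : α ≠ -(1 / 2)) (hβ : -1 < β)
    (hβ' : β ≠ -(1 / 2)) {A μ x y : ℝ} (hxy : |x| + |y| < 1) {F : ℝ → ℝ → ℝ}
    (hF : ∀ u v, |x * u| + |y * v| < 1 → F u v = A * (1 - x * u - y * v) ^ (-μ)) :
    jacobiFunctional α β F =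
      A * F4 (μ / 2) ((μ + 1) / 2) (α + 1) (β + 1) (x ^ 2) (y ^ 2) := by
  obtain ⟨R, hR1, hR⟩ := exists_one_lt_mul_lt_one (by positivity) hxy
  have hseries (u v : ℝ) (hu : |u| < R) (hv : |v| < R) :
      HasSum (fun p => A * doubleBinomialCoeff μ x y p * (u ^ p.1 * v ^ p.2)) (F u v) := by
    have hlt : |x * u| + |y * v| < 1 := by
      rw [abs_mul, abs_mul]
      nlinarith [mul_le_mul_of_nonneg_left hu.le (abs_nonneg x),
        mul_le_mul_of_nonneg_left hv.le (abs_nonneg y)]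
    rw [hF u v hlt]
    exact hasSum_const_mul_doubleBinomialCoeff_mul_pow_mul_pow A μ hlt
  have h := (hasSum_jacobiFunctional hα.le hβ.le hR1 hseries).tsum_eq
  simp only [mul_assoc A, tsum_mul_left] at h
  rw [← h, tsum_doubleBinomialCoeff_mul_jacobiMoment hα hα' hβ hβ']

theorem jacobi_poisson_representation_low_both_general {α β : ℝ} (hα : -1 < α)
    (hα' : α ≠ -(1 / 2)) (hβ : -1 < β) (hβ' : β ≠ -(1 / 2)) {t : ℝ} (ht : t ≠ 0) (θ φ : ℝ) :
    Hker α β t θ φ = jacobiFunctional α β (Psi α β t θ φ) := by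
  have hxy := abs_sin_mul_sin_div_cosh_add_abs_cos_mul_cos_div_cosh_lt_one
    (div_ne_zero ht two_ne_zero) (θ / 2) (φ / 2)
  rw [jacobiFunctional_eq_mul_F4 hα hα' hβ hβ' hxy
    fun u v huv => Psi_eq_mul_one_sub_sub_rpow α β t θ φ huv, Hker, add_assoc (α + β)]
  norm_num

theorem jacobi_poisson_representation_low_both (α β : ℝ)
    (hα₁ : -1 < α) (hα₂ : α < -(1/2)) (hβ₁ : -1 < β) (hβ₂ : β < -(1/2))
    (t : ℝ) (ht : 0 < t) (θ φ : ℝ) (hθ : θ ∈ Icc (0 : ℝ) π) (hφ : φ ∈ Icc (0 : ℝ) π) :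
    Hker α β t θ φ =
      (∫ v in Ioo (-1 : ℝ) 1, (∫ u in Ioo (-1 : ℝ) 1,
          (deriv (fun u' => deriv (fun v' => Psi α β t θ φ u' v') v) u) * PiFun α u)
          * PiFun β v)
      + (∫ v, (∫ u in Ioo (-1 : ℝ) 1,
          (-(deriv (fun u' => Psi α β t θ φ u' v) u)) * PiFun α u) ∂(PiMeas (-(1/2))))
      + (∫ v in Ioo (-1 : ℝ) 1,
          (∫ u, (-(deriv (fun v' => Psi α β t θ φ u v') v)) ∂(PiMeas (-(1/2)))) * PiFun β v)
      + ∫ v, (∫ u, Psi α β t θ φ u v ∂(PiMeas (-(1/2)))) ∂(PiMeas (-(1/2))) :=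
  jacobi_poisson_representation_low_both_general hα₁ hα₂.ne hβ₁ hβ₂.ne ht.ne' θ φ
end

section
/- Let α, β > -1 and let ξ₁, ξ₂, κ₁, κ₂ ≥ 0 be such that α+ξ₁+κ₁ ≥ -1/2 and β+ξ₂+κ₂ ≥ -1/2. Then there exists a constant C (depending only on α, β, ξ₁, ξ₂, κ₁, κ₂) such that for all θ, φ ∈ [0,π] with θ ≠ φ: (sin(θ/2)+sin(φ/2))^{2ξ₁} (cos(θ/2)+cos(φ/2))^{2ξ₂} ∫∫_{[-1,1]²} q(θ,φ,u,v)^{-(α+β+ξ₁+ξ₂+3/2)} dΠ_{α+ξ₁+κ₁}(u) dΠ_{β+ξ₂+κ₂}(v) ≤ C / μ_{α,β}(B(θ,|θ−φ|)), and (sin(θ/2)+sin(φ/2))^{2ξ₁} (cos(θ/2)+cos(φ/2))^{2ξ₂} ∫∫_{[-1,1]²} q(θ,φ,u,v)^{-(α+β+ξ₁+ξ₂+2)} dΠ_{α+ξ₁+κ₁}(u) dΠ_{β+ξ₂+κ₂}(v) ≤ C / (|θ−φ| μ_{α,β}(B(θ,|θ−φ|))). -/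
open MeasureTheory Real Set
open scoped ENNReal Classical

/-!
With `P = sin (θ/2) sin (φ/2)`, `Q = cos (θ/2) cos (φ/2)` and `R = 1 - cos ((θ - φ)/2)` one has
`q = R + (1 - u) P + (1 - v) Q`, so everything rests on the one-dimensional bound
`∫ (X + (1 - u) B) ^ (-(b + l)) dΠ_ν(u) ≲ X ^ (-l) (X + B) ^ (-b)`, valid for `b ≤ ν + 1/2` and
`l > 0`. Integrating in `u` with `B = P` leaves a factor `(R + P + (1 - v) Q) ^ (-a)` in the
integral over `v`. It is at most `(R + P) ^ (-a)` if `a ≥ 0`, and for `a < 0` it is bounded by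
a multiple of `(R + P) ^ (-a) + (R + (1 - v) Q) ^ (-a)`. Integrating in `v` with `B = Q` then
bounds the double integral by `R ^ (-l) (R + P) ^ (-a) (R + Q) ^ (-b)`, where
`a = α + ξ₁ + 1/2` and `b = β + ξ₂ + 1/2`.

Writing `r = |θ - φ|`, the quantities `R`, `R + P`, `R + Q` are comparable to `r ^ 2`,
`(θ + r) ^ 2`, `(π - θ + r) ^ 2`, the sums of sines and of cosines to `θ + r` and `π - θ + r`, and
`μ (B (θ, r)) ≲ r (θ + r) ^ (2 α + 1) (π - θ + r) ^ (2 β + 1)`. After multiplication by this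
measure only `r ^ (1 - 2 l)` survives; the two inequalities are `l = 1/2` and `l = 1`.
-/

open scoped NNReal

/-! ### Powers and their integrals -/

lemma rpow_le_of_le_mul_of_le_mul {A x y : ℝ} (p : ℝ) (hx : 0 < x) (hy : 0 < y)
    (hxy : x ≤ A * y) (hyx : y ≤ A * x) : x ^ p ≤ A ^ |p| * y ^ p := by
  have hA : 0 < A := pos_of_mul_pos_left (hx.trans_le hxy) hy.le
  rcases le_total 0 p with hp | hp
  · rw [abs_of_nonneg hp, ← mul_rpow hA.le hy.le]
    exact rpow_le_rpow hx.le hxy hp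
  · have h : A ^ p * x ^ p ≤ y ^ p := by
      rw [← mul_rpow hA.le hx.le]
      exact rpow_le_rpow_of_nonpos hy hyx hp
    calc x ^ p = A ^ (-p) * (A ^ p * x ^ p) := by
          rw [← mul_assoc, ← rpow_add hA, neg_add_cancel, rpow_zero, one_mul]
      _ ≤ A ^ |p| * y ^ p := by
          rw [abs_of_nonpos hp]
          gcongr

lemma rpow_le_mul_rpow_two_mul {A x y : ℝ} (p : ℝ) (hx : 0 < x) (hy : 0 < y)
    (hxy : x ≤ A * y ^ 2) (hyx : y ^ 2 ≤ A * x) : x ^ p ≤ A ^ |p| * y ^ (2 * p) := by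
  rw [rpow_mul hy.le, rpow_two]
  exact rpow_le_of_le_mul_of_le_mul p hx (pow_pos hy 2) hxy hyx

lemma add_rpow_le_two_rpow_mul {x y p : ℝ} (hx : 0 ≤ x) (hy : 0 ≤ y) (hp : 0 ≤ p) :
    (x + y) ^ p ≤ 2 ^ p * (x ^ p + y ^ p) := by
  have hx' := rpow_nonneg hx p
  have hy' := rpow_nonneg hy p
  rcases le_total x y with h | h
  · calc (x + y) ^ p ≤ (2 * y) ^ p := by gcongr; linarith
      _ = 2 ^ p * y ^ p := mul_rpow two_pos.le hy
      _ ≤ 2 ^ p * (x ^ p + y ^ p) := by gcongr; linarith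
  · calc (x + y) ^ p ≤ (2 * x) ^ p := by gcongr; linarith
      _ = 2 ^ p * x ^ p := mul_rpow two_pos.le hx
      _ ≤ 2 ^ p * (x ^ p + y ^ p) := by gcongr; linarith

lemma ofReal_integral_le_lintegral_ofReal {Ω : Type*} [MeasurableSpace Ω] (μ : Measure Ω)
    (f : Ω → ℝ) : ENNReal.ofReal (∫ x, f x ∂μ) ≤ ∫⁻ x, ENNReal.ofReal (f x) ∂μ := by
  by_cases hf : Integrable f μ
  · rw [integral_eq_lintegral_pos_part_sub_lintegral_neg_part hf]
    exact (ENNReal.ofReal_le_ofReal (sub_le_self _ ENNReal.toReal_nonneg)).trans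
      ENNReal.ofReal_toReal_le
  · simp [integral_undef hf]

lemma setLIntegral_comp_sub_left (a : ℝ) (s : Set ℝ) (f : ℝ → ℝ≥0∞) :
    ∫⁻ x in (fun x => a - x) ⁻¹' s, f (a - x) = ∫⁻ x in s, f x :=
  (Measure.measurePreserving_sub_left volume a).setLIntegral_comp_preimage_emb
    (MeasurableEquiv.subLeft a).measurableEmbedding f s

lemma lintegral_Ioc_rpow_sub_one {b d : ℝ} (hb : 0 < b) (hd : 0 ≤ d) :
    ∫⁻ t in Ioc 0 d, ENNReal.ofReal (t ^ (b - 1)) = ENNReal.ofReal (d ^ b / b) := by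
  have hint : IntegrableOn (fun t : ℝ => t ^ (b - 1)) (Ioc 0 d) :=
    (intervalIntegrable_iff_integrableOn_Ioc_of_le hd).1
      (intervalIntegral.intervalIntegrable_rpow' (by linarith))
  rw [← ofReal_integral_eq_lintegral_ofReal hint, ← intervalIntegral.integral_of_le hd,
    integral_rpow (Or.inl (by linarith)), sub_add_cancel, zero_rpow hb.ne', sub_zero]
  filter_upwards [ae_restrict_mem measurableSet_Ioc] with t ht
  exact rpow_nonneg ht.1.le _

lemma lintegral_Ioi_rpow_neg_one_sub {l d : ℝ} (hl : 0 < l) (hd : 0 < d) :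
    ∫⁻ t in Ioi d, ENNReal.ofReal (t ^ (-1 - l)) = ENNReal.ofReal (d ^ (-l) / l) := by
  rw [← ofReal_integral_eq_lintegral_ofReal (integrableOn_Ioi_rpow_of_lt (by linarith) hd),
    integral_Ioi_rpow_of_lt (by linarith) hd, show -1 - l + 1 = -l by ring, neg_div_neg_eq]
  filter_upwards [ae_restrict_mem measurableSet_Ioi] with t ht
  exact rpow_nonneg (hd.trans ht).le _

lemma lintegral_Ioc_rpow_le {p x y : ℝ} (hp : -1 < p) (hx : 0 ≤ x) (hxy : x ≤ y) (hy : 0 < y) :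
    ∫⁻ t in Ioc x y, ENNReal.ofReal (t ^ p) ≤
      ENNReal.ofReal ((2 ^ |p| + 2 / (p + 1)) * (y ^ p * (y - x))) := by
  have hp' : 0 < p + 1 := by linarith
  have : 0 ≤ y - x := sub_nonneg.2 hxy
  rcases le_total y (2 * x) with h | h
  · calc ∫⁻ t in Ioc x y, ENNReal.ofReal (t ^ p)
        ≤ ∫⁻ _ in Ioc x y, ENNReal.ofReal (2 ^ |p| * y ^ p) :=
          setLIntegral_mono' measurableSet_Ioc fun t ht => ENNReal.ofReal_le_ofReal <|
            rpow_le_of_le_mul_of_le_mul p (hx.trans_lt ht.1) hy (by linarith [ht.2])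
              (by linarith [ht.1])
      _ = ENNReal.ofReal (2 ^ |p| * (y ^ p * (y - x))) := by
          rw [setLIntegral_const, Real.volume_Ioc, ← ENNReal.ofReal_mul (by positivity), mul_assoc]
      _ ≤ _ := by gcongr; exact le_add_of_nonneg_right (by positivity)
  · calc ∫⁻ t in Ioc x y, ENNReal.ofReal (t ^ p)
        ≤ ∫⁻ t in Ioc 0 y, ENNReal.ofReal (t ^ p) := lintegral_mono_set (Ioc_subset_Ioc_left hx)
      _ = ENNReal.ofReal (y ^ p * y / (p + 1)) := by
          rw [← rpow_add_one hy.ne', ← lintegral_Ioc_rpow_sub_one hp' hy.le, add_sub_cancel_right]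
      _ ≤ ENNReal.ofReal (2 / (p + 1) * (y ^ p * (y - x))) := by
          rw [show 2 / (p + 1) * (y ^ p * (y - x)) = y ^ p * (2 * (y - x)) / (p + 1) by ring]
          gcongr
          linarith
      _ ≤ _ := by gcongr; exact le_add_of_nonneg_left (by positivity)

/-! ### A one-dimensional kernel integral -/

section Kernel

variable {b l X B : ℝ}

lemma lintegral_Ioc_rpow_mul_rpow_near_le (hb : 0 < b) (hl : 0 < l) (hX : 0 < X) (hB : 0 ≤ B) :
    ∫⁻ w in Ioc 0 (X / (X + B)),
        ENNReal.ofReal (w ^ (b - 1)) * ENNReal.ofReal ((X + w * B) ^ (-(b + l))) ≤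
      ENNReal.ofReal (1 / b * (X ^ (-l) * (X + B) ^ (-b))) := by
  have hD : 0 < X + B := by linarith
  calc _ ≤ ∫⁻ w in Ioc 0 (X / (X + B)),
        ENNReal.ofReal (w ^ (b - 1)) * ENNReal.ofReal (X ^ (-(b + l))) := by
        refine setLIntegral_mono' measurableSet_Ioc fun w hw => ?_
        gcongr _ * ENNReal.ofReal ?_
        exact rpow_le_rpow_of_nonpos hX (by linarith [mul_nonneg hw.1.le hB]) (by linarith)
    _ = ENNReal.ofReal ((X / (X + B)) ^ b / b * X ^ (-(b + l))) := by
        rw [lintegral_mul_const' _ _ ENNReal.ofReal_ne_top,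
          lintegral_Ioc_rpow_sub_one hb (by positivity), ← ENNReal.ofReal_mul (by positivity)]
    _ = _ := by
        rw [div_rpow hX.le hD.le, neg_add, rpow_add hX, rpow_neg hX.le b, rpow_neg hD.le b]
        have := (rpow_pos_of_pos hX b).ne'
        congr 1
        field_simp

lemma lintegral_Ioc_rpow_mul_rpow_far_le (hb : 0 < b) (hl : 0 < l) (hX : 0 < X) (hB : 0 ≤ B) :
    ∫⁻ w in Ioc (X / (X + B)) 1,
        ENNReal.ofReal (w ^ (b - 1)) * ENNReal.ofReal ((X + w * B) ^ (-(b + l))) ≤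
      ENNReal.ofReal (1 / l * (X ^ (-l) * (X + B) ^ (-b))) := by
  have hD : 0 < X + B := by linarith
  have hd : 0 < X / (X + B) := by positivity
  calc _ ≤ ∫⁻ w in Ioc (X / (X + B)) 1,
        ENNReal.ofReal (w ^ (-1 - l)) * ENNReal.ofReal ((X + B) ^ (-(b + l))) := by
        refine setLIntegral_mono' measurableSet_Ioc fun w hw => ?_
        have hw0 : 0 < w := hd.trans hw.1
        rw [← ENNReal.ofReal_mul (by positivity), ← ENNReal.ofReal_mul (by positivity)]
        refine ENNReal.ofReal_le_ofReal ?_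
        calc w ^ (b - 1) * (X + w * B) ^ (-(b + l))
            ≤ w ^ (b - 1) * (w * (X + B)) ^ (-(b + l)) := by
              gcongr ?_ * ?_
              exact rpow_le_rpow_of_nonpos (by positivity) (by nlinarith [hw.2]) (by linarith)
          _ = w ^ (-1 - l) * (X + B) ^ (-(b + l)) := by
              rw [mul_rpow hw0.le hD.le, ← mul_assoc, ← rpow_add hw0]
              ring_nf
    _ ≤ ∫⁻ w in Ioi (X / (X + B)),
        ENNReal.ofReal (w ^ (-1 - l)) * ENNReal.ofReal ((X + B) ^ (-(b + l))) :=
        lintegral_mono_set Ioc_subset_Ioi_self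
    _ = ENNReal.ofReal ((X / (X + B)) ^ (-l) / l * (X + B) ^ (-(b + l))) := by
        rw [lintegral_mul_const' _ _ ENNReal.ofReal_ne_top, lintegral_Ioi_rpow_neg_one_sub hl hd,
          ← ENNReal.ofReal_mul (by positivity)]
    _ = _ := by
        rw [div_rpow hX.le hD.le, neg_add, rpow_add hD]
        have := (rpow_pos_of_pos hD (-l)).ne'
        congr 1
        field_simp

-- The bounds `X ≤ X + w * B` and `w * (X + B) ≤ X + w * B` balance at `w = X / (X + B)`.
lemma lintegral_Ico_one_sub_rpow_mul_rpow_le (hb : 0 < b) (hl : 0 < l) (hX : 0 < X)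
    (hB : 0 ≤ B) :
    ∫⁻ u in Ico (0 : ℝ) 1,
        ENNReal.ofReal ((1 - u) ^ (b - 1)) * ENNReal.ofReal ((X + (1 - u) * B) ^ (-(b + l))) ≤
      ENNReal.ofReal ((1 / b + 1 / l) * (X ^ (-l) * (X + B) ^ (-b))) := by
  set F : ℝ → ℝ≥0∞ :=
    fun w => ENNReal.ofReal (w ^ (b - 1)) * ENNReal.ofReal ((X + w * B) ^ (-(b + l)))
  have reflect : ∫⁻ u in Ico (0 : ℝ) 1, F (1 - u) = ∫⁻ w in Ioc (0 : ℝ) 1, F w := by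
    simpa using setLIntegral_comp_sub_left 1 (Ioc 0 1) F
  rw [reflect, add_mul, ENNReal.ofReal_add (by positivity) (by positivity)]
  calc ∫⁻ w in Ioc (0 : ℝ) 1, F w
      ≤ ∫⁻ w in Ioc 0 (X / (X + B)) ∪ Ioc (X / (X + B)) 1, F w :=
        lintegral_mono_set Ioc_subset_Ioc_union_Ioc
    _ ≤ _ := lintegral_union_le _ _ _
    _ ≤ _ := add_le_add (lintegral_Ioc_rpow_mul_rpow_near_le hb hl hX hB)
        (lintegral_Ioc_rpow_mul_rpow_far_le hb hl hX hB)

end Kernel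

/-! ### Integrals against `PiMeas` -/

section PiMeas

lemma ofReal_mul_one_sub_sq_rpow_le (c p : ℝ) {u : ℝ} (hu : u ∈ Ico (0 : ℝ) 1) :
    ENNReal.ofReal (c * (1 - u ^ 2) ^ p) ≤
      ENNReal.ofReal (|c| * 2 ^ |p|) * ENNReal.ofReal ((1 - u) ^ p) := by
  have hu' : 0 < 1 - u := sub_pos.2 hu.2
  have hsq : 0 < 1 - u ^ 2 := by nlinarith [hu.1]
  rw [← ENNReal.ofReal_mul (by positivity), mul_assoc]
  refine ENNReal.ofReal_le_ofReal ?_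
  gcongr
  · exact le_abs_self c
  · exact rpow_le_of_le_mul_of_le_mul _ hsq hu' (by nlinarith [hu.1]) (by nlinarith [hu.1])

lemma lintegral_PiMeas_le {ν : ℝ} (hν : ν ≠ -(1 / 2)) :
    ∃ K : ℝ≥0, ∀ g : ℝ → ℝ≥0∞, (∀ u ∈ Ico (0 : ℝ) 1, g (-u) ≤ g u) →
      ∫⁻ u, g u ∂PiMeas ν ≤
        K * ∫⁻ u in Ico (0 : ℝ) 1, ENNReal.ofReal ((1 - u) ^ (ν - 1 / 2)) * g u := by
  set c := Gamma (ν + 1) / (√π * Gamma (ν + 1 / 2))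
  set A := |c| * 2 ^ |ν - 1 / 2|
  set w : ℝ → ℝ≥0∞ := fun u => ENNReal.ofReal (c * (1 - u ^ 2) ^ (ν - 1 / 2))
  refine ⟨2 * A.toNNReal, fun g hg => ?_⟩
  have reflect : ∫⁻ u in Ioc (-1 : ℝ) 0, w u * g u = ∫⁻ u in Ico (0 : ℝ) 1, w u * g (-u) := by
    simpa [w] using (setLIntegral_comp_sub_left 0 (Ioc (-1) 0) fun u => w u * g u).symm
  have cover : Ioo (-1 : ℝ) 1 ⊆ Ioc (-1) 0 ∪ Ico 0 1 := fun u hu =>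
    (le_total u 0).imp (fun h => ⟨hu.1, h⟩) fun h => ⟨h, hu.2⟩
  have half_le : ∀ f : ℝ → ℝ≥0∞, (∀ u ∈ Ico (0 : ℝ) 1, f u ≤ g u) →
      ∫⁻ u in Ico (0 : ℝ) 1, w u * f u ≤ ENNReal.ofReal A *
        ∫⁻ u in Ico (0 : ℝ) 1, ENNReal.ofReal ((1 - u) ^ (ν - 1 / 2)) * g u := by
    intro f hf
    rw [← lintegral_const_mul' _ _ ENNReal.ofReal_ne_top]
    refine setLIntegral_mono' measurableSet_Ico fun u hu => ?_
    rw [← mul_assoc]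
    exact mul_le_mul' (ofReal_mul_one_sub_sq_rpow_le _ _ hu) (hf u hu)
  rw [PiMeas, if_neg hν, ← Measure.restrict_congr_set Ioo_ae_eq_Icc]
  calc _ ≤ ∫⁻ u in Ioo (-1 : ℝ) 1, w u * g u :=
        lintegral_withDensity_le_lintegral_mul _ (by fun_prop) g
    _ ≤ ∫⁻ u in Ioc (-1 : ℝ) 0 ∪ Ico 0 1, w u * g u := lintegral_mono_set cover
    _ ≤ _ := lintegral_union_le _ _ _
    _ ≤ _ := add_le_add (reflect.trans_le (half_le _ hg)) (half_le _ fun _ _ => le_rfl)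
    _ = _ := by
        rw [← two_mul, ← mul_assoc]
        rfl

lemma ae_PiMeas_mem_Icc (ν : ℝ) : ∀ᵐ u ∂PiMeas ν, u ∈ Icc (-1 : ℝ) 1 := by
  rw [PiMeas]
  split_ifs
  · exact Measure.ae_smul_measure (by simp [ae_add_measure_iff]) _
  · exact (withDensity_absolutelyContinuous _ _).ae_le (ae_restrict_mem measurableSet_Icc)

lemma isFiniteMeasure_PiMeas {ν : ℝ} (hν : -(1 / 2) ≤ ν) : IsFiniteMeasure (PiMeas ν) := by
  constructor
  rcases eq_or_ne ν (-(1 / 2)) with rfl | h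
  · simp [PiMeas]
  · have hν' : 0 < ν + 1 / 2 := by linarith [hν.lt_of_ne' h]
    obtain ⟨K, hK⟩ := lintegral_PiMeas_le h
    have mass_le : PiMeas ν univ ≤
        K * ∫⁻ u in Ico (0 : ℝ) 1, ENNReal.ofReal ((1 - u) ^ (ν - 1 / 2)) := by
      simpa using hK (fun _ => 1) fun _ _ => le_rfl
    have reflect : ∫⁻ u in Ico (0 : ℝ) 1, ENNReal.ofReal ((1 - u) ^ (ν - 1 / 2)) =
        ∫⁻ w in Ioc (0 : ℝ) 1, ENNReal.ofReal (w ^ (ν + 1 / 2 - 1)) := by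
      rw [← setLIntegral_comp_sub_left 1]
      simp only [preimage_const_sub_Ico, sub_self, sub_zero, sub_sub_cancel]
      ring_nf
    rw [reflect, lintegral_Ioc_rpow_sub_one hν' zero_le_one] at mass_le
    exact mass_le.trans_lt (ENNReal.mul_lt_top ENNReal.coe_lt_top ENNReal.ofReal_lt_top)

variable {ν a b l : ℝ}

lemma lintegral_PiMeas_rpow_le_of_nonpos (hν : -(1 / 2) ≤ ν) (hb : b ≤ 0) (hl : 0 < l) :
    ∃ K : ℝ≥0, ∀ X B : ℝ, 0 < X → 0 ≤ B →
      ∫⁻ u, ENNReal.ofReal ((X + (1 - u) * B) ^ (-(b + l))) ∂PiMeas ν ≤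
        K * ENNReal.ofReal (X ^ (-l) * (X + B) ^ (-b)) := by
  have := isFiniteMeasure_PiMeas hν
  refine ⟨(PiMeas ν univ).toNNReal * ((2 : ℝ) ^ (-b)).toNNReal, fun X B hX hB => ?_⟩
  have integrand_le : ∀ u ∈ Icc (-1 : ℝ) 1,
      (X + (1 - u) * B) ^ (-(b + l)) ≤ 2 ^ (-b) * (X ^ (-l) * (X + B) ^ (-b)) := by
    intro u hu
    have hXY : X ≤ X + (1 - u) * B := by nlinarith [hu.2]
    have hYD : X + (1 - u) * B ≤ 2 * (X + B) := by nlinarith [hu.1]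
    have hY : 0 < X + (1 - u) * B := hX.trans_le hXY
    calc _ = (X + (1 - u) * B) ^ (-b) * (X + (1 - u) * B) ^ (-l) := by rw [neg_add, rpow_add hY]
      _ ≤ (2 * (X + B)) ^ (-b) * X ^ (-l) := by
          gcongr ?_ * ?_
          · exact rpow_le_rpow hY.le hYD (by linarith)
          · exact rpow_le_rpow_of_nonpos hX hXY (by linarith)
      _ = _ := by
          rw [mul_rpow two_pos.le (by positivity)]
          ring
  calc _ ≤ ∫⁻ _, ENNReal.ofReal (2 ^ (-b) * (X ^ (-l) * (X + B) ^ (-b))) ∂PiMeas ν := by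
        refine lintegral_mono_ae ?_
        filter_upwards [ae_PiMeas_mem_Icc ν] with u hu
        exact ENNReal.ofReal_le_ofReal (integrand_le u hu)
    _ = _ := by
        rw [lintegral_const, ENNReal.ofReal_mul (by positivity), ENNReal.coe_mul,
          ENNReal.coe_toNNReal (measure_ne_top _ _), ENNReal.ofReal]
        ring

lemma lintegral_PiMeas_rpow_le_of_pos (hb : 0 < b) (hbν : b ≤ ν + 1 / 2) (hl : 0 < l) :
    ∃ K : ℝ≥0, ∀ X B : ℝ, 0 < X → 0 ≤ B →
      ∫⁻ u, ENNReal.ofReal ((X + (1 - u) * B) ^ (-(b + l))) ∂PiMeas ν ≤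
        K * ENNReal.ofReal (X ^ (-l) * (X + B) ^ (-b)) := by
  obtain ⟨K, hK⟩ := lintegral_PiMeas_le (ν := ν) (by intro h; linarith)
  refine ⟨K * (1 / b + 1 / l).toNNReal, fun X B hX hB => ?_⟩
  have antitone_neg : ∀ u ∈ Ico (0 : ℝ) 1, ENNReal.ofReal ((X + (1 - -u) * B) ^ (-(b + l))) ≤
      ENNReal.ofReal ((X + (1 - u) * B) ^ (-(b + l))) := by
    intro u hu
    have hY : 0 < X + (1 - u) * B := add_pos_of_pos_of_nonneg hX (by nlinarith [hu.2])
    exact ENNReal.ofReal_le_ofReal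
      (rpow_le_rpow_of_nonpos hY (by nlinarith [hu.1]) (by linarith))
  calc _ ≤ K * ∫⁻ u in Ico (0 : ℝ) 1, ENNReal.ofReal ((1 - u) ^ (ν - 1 / 2)) *
        ENNReal.ofReal ((X + (1 - u) * B) ^ (-(b + l))) := hK _ antitone_neg
    _ ≤ K * ∫⁻ u in Ico (0 : ℝ) 1, ENNReal.ofReal ((1 - u) ^ (b - 1)) *
        ENNReal.ofReal ((X + (1 - u) * B) ^ (-(b + l))) := by
        gcongr K * ?_
        refine setLIntegral_mono' measurableSet_Ico fun u hu => ?_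
        gcongr ENNReal.ofReal ?_ * _
        exact rpow_le_rpow_of_exponent_ge (by linarith [hu.2]) (by linarith [hu.1]) (by linarith)
    _ ≤ K * ENNReal.ofReal ((1 / b + 1 / l) * (X ^ (-l) * (X + B) ^ (-b))) := by
        gcongr
        exact lintegral_Ico_one_sub_rpow_mul_rpow_le hb hl hX hB
    _ = _ := by
        rw [ENNReal.ofReal_mul (by positivity), ENNReal.coe_mul, mul_assoc, ENNReal.ofReal]

lemma lintegral_PiMeas_rpow_le (hν : -(1 / 2) ≤ ν) (hbν : b ≤ ν + 1 / 2) (hl : 0 < l) :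
    ∃ K : ℝ≥0, ∀ X B : ℝ, 0 < X → 0 ≤ B →
      ∫⁻ u, ENNReal.ofReal ((X + (1 - u) * B) ^ (-(b + l))) ∂PiMeas ν ≤
        K * ENNReal.ofReal (X ^ (-l) * (X + B) ^ (-b)) :=
  (le_or_gt b 0).elim (fun hb => lintegral_PiMeas_rpow_le_of_nonpos hν hb hl)
    fun hb => lintegral_PiMeas_rpow_le_of_pos hb hbν hl

lemma lintegral_PiMeas_rpow_mul_rpow_le_of_nonneg (hν : -(1 / 2) ≤ ν) (hbν : b ≤ ν + 1 / 2)
    (hl : 0 < l) (ha : 0 ≤ a) :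
    ∃ K : ℝ≥0, ∀ X S B : ℝ, 0 < X → X ≤ S → 0 ≤ B →
      ∫⁻ u, ENNReal.ofReal ((X + (1 - u) * B) ^ (-(b + l)) * (S + (1 - u) * B) ^ (-a))
          ∂PiMeas ν ≤
        K * ENNReal.ofReal (X ^ (-l) * S ^ (-a) * (X + B) ^ (-b)) := by
  obtain ⟨K, hK⟩ := lintegral_PiMeas_rpow_le hν hbν hl
  refine ⟨K, fun X S B hX hXS hB => ?_⟩
  have hS : 0 < S := hX.trans_le hXS
  calc _ ≤ ∫⁻ u, ENNReal.ofReal ((X + (1 - u) * B) ^ (-(b + l))) * ENNReal.ofReal (S ^ (-a))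
        ∂PiMeas ν := by
        refine lintegral_mono_ae ?_
        filter_upwards [ae_PiMeas_mem_Icc ν] with u hu
        have hB' : 0 ≤ (1 - u) * B := mul_nonneg (sub_nonneg.2 hu.2) hB
        rw [← ENNReal.ofReal_mul (by positivity)]
        gcongr ENNReal.ofReal (_ * ?_)
        exact rpow_le_rpow_of_nonpos hS (by linarith) (by linarith)
    _ ≤ K * ENNReal.ofReal (X ^ (-l) * (X + B) ^ (-b)) * ENNReal.ofReal (S ^ (-a)) := by
        rw [lintegral_mul_const' _ _ ENNReal.ofReal_ne_top]
        gcongr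
        exact hK X B hX hB
    _ = _ := by
        rw [mul_assoc, ← ENNReal.ofReal_mul (by positivity), mul_right_comm]

lemma lintegral_PiMeas_rpow_mul_rpow_le_add (ν c : ℝ) {p X S B : ℝ} (hp : 0 ≤ p) (hX : 0 < X)
    (hS : 0 ≤ S) (hB : 0 ≤ B) :
    ∫⁻ u, ENNReal.ofReal ((X + (1 - u) * B) ^ c * (S + (1 - u) * B) ^ p) ∂PiMeas ν ≤
      ENNReal.ofReal (2 ^ p) *
        ((∫⁻ u, ENNReal.ofReal ((X + (1 - u) * B) ^ c) ∂PiMeas ν) * ENNReal.ofReal (S ^ p) +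
          ∫⁻ u, ENNReal.ofReal ((X + (1 - u) * B) ^ (c + p)) ∂PiMeas ν) := by
  rw [← lintegral_mul_const' _ _ ENNReal.ofReal_ne_top, ← lintegral_add_right _ (by fun_prop),
    ← lintegral_const_mul' _ _ ENNReal.ofReal_ne_top]
  refine lintegral_mono_ae ?_
  filter_upwards [ae_PiMeas_mem_Icc ν] with u hu
  have hB' : 0 ≤ (1 - u) * B := mul_nonneg (sub_nonneg.2 hu.2) hB
  rw [← ENNReal.ofReal_mul (by positivity), ← ENNReal.ofReal_add (by positivity) (by positivity),
    ← ENNReal.ofReal_mul (by positivity), rpow_add (by positivity), ← mul_add, mul_left_comm]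
  gcongr ENNReal.ofReal (_ * ?_)
  calc (S + (1 - u) * B) ^ p ≤ (S + (X + (1 - u) * B)) ^ p := by gcongr; linarith
    _ ≤ _ := add_rpow_le_two_rpow_mul hS (by positivity) hp

lemma lintegral_PiMeas_rpow_mul_rpow_le_of_nonpos (hν : -(1 / 2) ≤ ν) (hbν : b ≤ ν + 1 / 2)
    (hal : 0 < a + l) (ha : a ≤ 0) :
    ∃ K : ℝ≥0, ∀ X S B : ℝ, 0 < X → X ≤ S → 0 ≤ B →
      ∫⁻ u, ENNReal.ofReal ((X + (1 - u) * B) ^ (-(b + l)) * (S + (1 - u) * B) ^ (-a))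
          ∂PiMeas ν ≤
        K * ENNReal.ofReal (X ^ (-l) * S ^ (-a) * (X + B) ^ (-b)) := by
  obtain ⟨K₁, hK₁⟩ := lintegral_PiMeas_rpow_le (l := l) hν hbν (by linarith)
  obtain ⟨K₂, hK₂⟩ := lintegral_PiMeas_rpow_le hν hbν hal
  refine ⟨((2 : ℝ) ^ (-a)).toNNReal * (K₁ + K₂), fun X S B hX hXS hB => ?_⟩
  have hS : 0 < S := hX.trans_le hXS
  have first_le : (∫⁻ u, ENNReal.ofReal ((X + (1 - u) * B) ^ (-(b + l))) ∂PiMeas ν) *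
      ENNReal.ofReal (S ^ (-a)) ≤
        K₁ * ENNReal.ofReal (X ^ (-l) * S ^ (-a) * (X + B) ^ (-b)) := by
    refine (mul_le_mul_left (hK₁ X B hX hB) _).trans_eq ?_
    rw [mul_assoc, ← ENNReal.ofReal_mul (by positivity), mul_right_comm]
  have second_le : ∫⁻ u, ENNReal.ofReal ((X + (1 - u) * B) ^ (-(b + l) + -a)) ∂PiMeas ν ≤
        K₂ * ENNReal.ofReal (X ^ (-l) * S ^ (-a) * (X + B) ^ (-b)) := by
    rw [show -(b + l) + -a = -(b + (a + l)) by ring]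
    refine (hK₂ X B hX hB).trans ?_
    rw [neg_add_rev, rpow_add hX]
    gcongr _ * ENNReal.ofReal (_ * ?_ * _)
    exact rpow_le_rpow hX.le hXS (by linarith)
  calc _ ≤ _ := lintegral_PiMeas_rpow_mul_rpow_le_add ν _ (by linarith) hX hS.le hB
    _ ≤ _ := mul_le_mul_right (add_le_add first_le second_le) _
    _ = _ := by
        rw [← add_mul, ← mul_assoc]
        rfl

lemma lintegral_PiMeas_rpow_mul_rpow_le (hν : -(1 / 2) ≤ ν) (hbν : b ≤ ν + 1 / 2) (hl : 0 < l)
    (hal : 0 < a + l) :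
    ∃ K : ℝ≥0, ∀ X S B : ℝ, 0 < X → X ≤ S → 0 ≤ B →
      ∫⁻ u, ENNReal.ofReal ((X + (1 - u) * B) ^ (-(b + l)) * (S + (1 - u) * B) ^ (-a))
          ∂PiMeas ν ≤
        K * ENNReal.ofReal (X ^ (-l) * S ^ (-a) * (X + B) ^ (-b)) :=
  (le_total 0 a).elim (lintegral_PiMeas_rpow_mul_rpow_le_of_nonneg hν hbν hl)
    (lintegral_PiMeas_rpow_mul_rpow_le_of_nonpos hν hbν hal)

lemma lintegral_lintegral_PiMeas_rpow_le {ν₁ ν₂ : ℝ} (hν₁ : -(1 / 2) ≤ ν₁) (hν₂ : -(1 / 2) ≤ ν₂)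
    (haν₁ : a ≤ ν₁ + 1 / 2) (hbν₂ : b ≤ ν₂ + 1 / 2) (hl : 0 < l) (hal : 0 < a + l)
    (hbl : 0 < b + l) :
    ∃ K : ℝ≥0, ∀ R P Q : ℝ, 0 < R → 0 ≤ P → 0 ≤ Q →
      ∫⁻ v, ∫⁻ u, ENNReal.ofReal ((R + (1 - u) * P + (1 - v) * Q) ^ (-(a + b + l)))
          ∂PiMeas ν₁ ∂PiMeas ν₂ ≤
        K * ENNReal.ofReal (R ^ (-l) * (R + P) ^ (-a) * (R + Q) ^ (-b)) := by
  obtain ⟨K₁, hK₁⟩ := lintegral_PiMeas_rpow_le hν₁ haν₁ hbl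
  obtain ⟨K₂, hK₂⟩ := lintegral_PiMeas_rpow_mul_rpow_le hν₂ hbν₂ hl hal
  refine ⟨K₁ * K₂, fun R P Q hR hP hQ => ?_⟩
  calc _ ≤ ∫⁻ v, K₁ * ENNReal.ofReal ((R + (1 - v) * Q) ^ (-(b + l)) *
        (R + P + (1 - v) * Q) ^ (-a)) ∂PiMeas ν₂ := by
        refine lintegral_mono_ae ?_
        filter_upwards [ae_PiMeas_mem_Icc ν₂] with v hv
        have hX : 0 < R + (1 - v) * Q :=
          add_pos_of_pos_of_nonneg hR (mul_nonneg (sub_nonneg.2 hv.2) hQ)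
        simpa only [add_right_comm R ((1 - v) * Q), ← add_assoc a] using hK₁ _ P hX hP
    _ ≤ K₁ * (K₂ * ENNReal.ofReal (R ^ (-l) * (R + P) ^ (-a) * (R + Q) ^ (-b))) := by
        rw [lintegral_const_mul' _ _ ENNReal.coe_ne_top]
        gcongr
        exact hK₂ R (R + P) Q hR (by linarith) hQ
    _ = _ := by rw [← mul_assoc, ENNReal.coe_mul]

end PiMeas

/-! ### Half-angle comparisons -/

section Trigonometry

lemma sin_half_nonneg {x : ℝ} (hx : x ∈ Icc 0 π) : 0 ≤ sin (x / 2) :=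
  sin_nonneg_of_nonneg_of_le_pi (by linarith [hx.1]) (by linarith [hx.1, hx.2])

lemma cos_half_nonneg {x : ℝ} (hx : x ∈ Icc 0 π) : 0 ≤ cos (x / 2) :=
  cos_nonneg_of_mem_Icc ⟨by linarith [hx.1, pi_pos], by linarith [hx.2]⟩

lemma sin_half_pi_sub (x : ℝ) : sin ((π - x) / 2) = cos (x / 2) := by
  rw [sub_div, sin_pi_div_two_sub]

lemma cos_half_pi_sub (x : ℝ) : cos ((π - x) / 2) = sin (x / 2) := by
  rw [sub_div, cos_pi_div_two_sub]

lemma pi_sub_mem_Icc {x : ℝ} (hx : x ∈ Icc 0 π) : π - x ∈ Icc 0 π :=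
  ⟨sub_nonneg.2 hx.2, sub_le_self π hx.1⟩

lemma sin_half_le {x : ℝ} (hx : 0 ≤ x) : sin (x / 2) ≤ x / 2 := sin_le (by positivity)

lemma le_pi_mul_sin_half {x : ℝ} (hx : x ∈ Icc 0 π) : x ≤ π * sin (x / 2) := by
  calc x = π * (2 / π * (x / 2)) := by field_simp
    _ ≤ π * sin (x / 2) := by
        gcongr
        exact mul_le_sin (by linarith [hx.1]) (by linarith [hx.2])

lemma one_sub_cos_half_le (x : ℝ) : 1 - cos (x / 2) ≤ x ^ 2 / 8 := by
  linarith [one_sub_sq_div_two_le_cos (x := x / 2)]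

lemma sq_le_mul_one_sub_cos_half {x : ℝ} (hx : |x| ≤ 2 * π) :
    x ^ 2 ≤ 2 * π ^ 2 * (1 - cos (x / 2)) := by
  have h : cos (x / 2) ≤ 1 - 2 / π ^ 2 * (x / 2) ^ 2 :=
    cos_le_one_sub_mul_cos_sq (by rw [abs_div, abs_two]; linarith)
  calc x ^ 2 = 2 * π ^ 2 * (2 / π ^ 2 * (x / 2) ^ 2) := by field_simp
    _ ≤ _ := by gcongr; linarith

lemma cos_half_sub (θ φ : ℝ) : cos ((θ - φ) / 2) =
    sin (θ / 2) * sin (φ / 2) + cos (θ / 2) * cos (φ / 2) := by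
  rw [sub_div, cos_sub, add_comm]

lemma qf_eq (θ φ u v : ℝ) : qf θ φ u v = 1 - cos ((θ - φ) / 2) +
    (1 - u) * (sin (θ / 2) * sin (φ / 2)) + (1 - v) * (cos (θ / 2) * cos (φ / 2)) := by
  rw [qf, cos_half_sub]
  ring

variable {θ φ : ℝ}

lemma sq_sub_le_mul_one_sub_cos_half_sub (hθ : θ ∈ Icc 0 π) (hφ : φ ∈ Icc 0 π) :
    |θ - φ| ^ 2 ≤ 2 * π ^ 2 * (1 - cos ((θ - φ) / 2)) := by
  rw [sq_abs]
  exact sq_le_mul_one_sub_cos_half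
    (abs_le.2 ⟨by linarith [hθ.1, hφ.2, pi_pos], by linarith [hφ.1, hθ.2, pi_pos]⟩)

lemma one_sub_cos_half_sub_pos (hθ : θ ∈ Icc 0 π) (hφ : φ ∈ Icc 0 π) (hne : θ ≠ φ) :
    0 < 1 - cos ((θ - φ) / 2) :=
  pos_of_mul_pos_right ((pow_pos (abs_pos.2 (sub_ne_zero.2 hne)) 2).trans_le
    (sq_sub_le_mul_one_sub_cos_half_sub hθ hφ)) (by positivity)

lemma one_sub_cos_half_sub_rpow_le (p : ℝ) (hθ : θ ∈ Icc 0 π) (hφ : φ ∈ Icc 0 π) (hne : θ ≠ φ) :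
    (1 - cos ((θ - φ) / 2)) ^ p ≤ (2 * π ^ 2) ^ |p| * |θ - φ| ^ (2 * p) := by
  refine rpow_le_mul_rpow_two_mul p (one_sub_cos_half_sub_pos hθ hφ hne)
    (abs_pos.2 (sub_ne_zero.2 hne)) ?_ (sq_sub_le_mul_one_sub_cos_half_sub hθ hφ)
  rw [sq_abs]
  calc _ ≤ (θ - φ) ^ 2 := by linarith [one_sub_cos_half_le (θ - φ), sq_nonneg (θ - φ)]
    _ ≤ _ := le_mul_of_one_le_left (sq_nonneg _) (by nlinarith [pi_gt_three])

lemma one_sub_cos_half_mul_cos_half_rpow_le (p : ℝ) (hθ : θ ∈ Icc 0 π) (hφ : φ ∈ Icc 0 π)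
    (hne : θ ≠ φ) :
    (1 - cos (θ / 2) * cos (φ / 2)) ^ p ≤ (8 * π ^ 2) ^ |p| * (θ + |θ - φ|) ^ (2 * p) := by
  have hr : 0 < |θ - φ| := abs_pos.2 (sub_ne_zero.2 hne)
  have hR := one_sub_cos_half_sub_pos hθ hφ hne
  have hr_sq := sq_sub_le_mul_one_sub_cos_half_sub hθ hφ
  have hR_le := one_sub_cos_half_le (θ - φ)
  have hP := mul_nonneg (sin_half_nonneg hθ) (sin_half_nonneg hφ)
  have hφ_le : φ ≤ θ + |θ - φ| := by linarith [neg_abs_le (θ - φ)]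
  have hθ_sq : θ ^ 2 ≤ 2 * π ^ 2 * (1 - cos (θ / 2) * cos (φ / 2)) := by
    refine (sq_le_mul_one_sub_cos_half (abs_le.2 ⟨?_, ?_⟩)).trans ?_
    · linarith [hθ.1, pi_pos]
    · linarith [hθ.2, pi_pos]
    · gcongr
      exact mul_le_of_le_one_right (cos_half_nonneg hθ) (cos_le_one _)
  have hP_le : sin (θ / 2) * sin (φ / 2) ≤ θ / 2 * ((θ + |θ - φ|) / 2) :=
    mul_le_mul (sin_half_le hθ.1) (by linarith [sin_half_le hφ.1]) (sin_half_nonneg hφ)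
      (by linarith [hθ.1])
  rw [cos_half_sub] at hR hr_sq hR_le
  rw [← sq_abs] at hR_le
  refine rpow_le_mul_rpow_two_mul p (by linarith) (by linarith [hθ.1]) ?_ ?_
  · calc _ ≤ (θ + |θ - φ|) ^ 2 := by nlinarith [hθ.1]
      _ ≤ _ := le_mul_of_one_le_left (sq_nonneg _) (by nlinarith [pi_gt_three])
  · nlinarith [sq_nonneg (θ - |θ - φ|), pi_pos]

lemma sin_half_add_sin_half_rpow_le (p : ℝ) (hθ : θ ∈ Icc 0 π) (hφ : φ ∈ Icc 0 π) (hne : θ ≠ φ) :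
    (sin (θ / 2) + sin (φ / 2)) ^ p ≤ (2 * π) ^ |p| * (θ + |θ - φ|) ^ p := by
  have hr : 0 < |θ - φ| := abs_pos.2 (sub_ne_zero.2 hne)
  have hΘ : 0 < θ + |θ - φ| := by linarith [hθ.1]
  have hφ_le : φ ≤ θ + |θ - φ| := by linarith [neg_abs_le (θ - φ)]
  have le_Θ : sin (θ / 2) + sin (φ / 2) ≤ θ + |θ - φ| := by
    linarith [sin_half_le hθ.1, sin_half_le hφ.1]
  have Θ_le : θ + |θ - φ| ≤ 2 * π * (sin (θ / 2) + sin (φ / 2)) := by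
    have : |θ - φ| ≤ θ + φ := abs_le.2 ⟨by linarith [hθ.1], by linarith [hφ.1]⟩
    linarith [le_pi_mul_sin_half hθ, le_pi_mul_sin_half hφ, hφ.1]
  exact rpow_le_of_le_mul_of_le_mul p (pos_of_mul_pos_right (hΘ.trans_le Θ_le) (by positivity)) hΘ
    (le_Θ.trans (le_mul_of_one_le_left hΘ.le (by linarith [pi_gt_three]))) Θ_le

lemma abs_pi_sub_sub_pi_sub (θ φ : ℝ) : |π - θ - (π - φ)| = |θ - φ| := by
  rw [sub_sub_sub_cancel_left, abs_sub_comm]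

lemma one_sub_sin_half_mul_sin_half_rpow_le (p : ℝ) (hθ : θ ∈ Icc 0 π) (hφ : φ ∈ Icc 0 π)
    (hne : θ ≠ φ) :
    (1 - sin (θ / 2) * sin (φ / 2)) ^ p ≤ (8 * π ^ 2) ^ |p| * (π - θ + |θ - φ|) ^ (2 * p) := by
  simpa only [cos_half_pi_sub, abs_pi_sub_sub_pi_sub] using
    one_sub_cos_half_mul_cos_half_rpow_le p (pi_sub_mem_Icc hθ) (pi_sub_mem_Icc hφ)
      (sub_right_injective.ne hne)

lemma cos_half_add_cos_half_rpow_le (p : ℝ) (hθ : θ ∈ Icc 0 π) (hφ : φ ∈ Icc 0 π) (hne : θ ≠ φ) :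
    (cos (θ / 2) + cos (φ / 2)) ^ p ≤ (2 * π) ^ |p| * (π - θ + |θ - φ|) ^ p := by
  simpa only [sin_half_pi_sub, abs_pi_sub_sub_pi_sub] using
    sin_half_add_sin_half_rpow_le p (pi_sub_mem_Icc hθ) (pi_sub_mem_Icc hφ)
      (sub_right_injective.ne hne)

end Trigonometry

/-! ### The double integral of a power of `qf` -/

section QfIntegral

variable {ν₁ ν₂ a b l : ℝ}

lemma integral_integral_qf_rpow_le (hν₁ : -(1 / 2) ≤ ν₁) (hν₂ : -(1 / 2) ≤ ν₂)
    (haν₁ : a ≤ ν₁ + 1 / 2) (hbν₂ : b ≤ ν₂ + 1 / 2) (hl : 0 < l) (hal : 0 < a + l)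
    (hbl : 0 < b + l) :
    ∃ K : ℝ≥0, ∀ θ ∈ Icc (0 : ℝ) π, ∀ φ ∈ Icc (0 : ℝ) π, θ ≠ φ →
      ∫ v, (∫ u, qf θ φ u v ^ (-(a + b + l)) ∂PiMeas ν₁) ∂PiMeas ν₂ ≤
        K * ((1 - cos ((θ - φ) / 2)) ^ (-l) * (1 - cos (θ / 2) * cos (φ / 2)) ^ (-a) *
          (1 - sin (θ / 2) * sin (φ / 2)) ^ (-b)) := by
  obtain ⟨K, hK⟩ := lintegral_lintegral_PiMeas_rpow_le hν₁ hν₂ haν₁ hbν₂ hl hal hbl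
  refine ⟨K, fun θ hθ φ hφ hne => ?_⟩
  have hR := one_sub_cos_half_sub_pos hθ hφ hne
  have hP := mul_nonneg (sin_half_nonneg hθ) (sin_half_nonneg hφ)
  have hQ := mul_nonneg (cos_half_nonneg hθ) (cos_half_nonneg hφ)
  have hRP : 1 - cos (θ / 2) * cos (φ / 2) =
      1 - cos ((θ - φ) / 2) + sin (θ / 2) * sin (φ / 2) := by rw [cos_half_sub]; ring
  have hRQ : 1 - sin (θ / 2) * sin (φ / 2) =
      1 - cos ((θ - φ) / 2) + cos (θ / 2) * cos (φ / 2) := by rw [cos_half_sub]; ring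
  rw [hRP, hRQ, ← ENNReal.ofReal_le_ofReal_iff (by positivity),
    ENNReal.ofReal_mul (NNReal.coe_nonneg K), ENNReal.ofReal_coe_nnreal]
  calc _ ≤ ∫⁻ v, ENNReal.ofReal (∫ u, qf θ φ u v ^ (-(a + b + l)) ∂PiMeas ν₁) ∂PiMeas ν₂ :=
        ofReal_integral_le_lintegral_ofReal _ _
    _ ≤ ∫⁻ v, ∫⁻ u, ENNReal.ofReal (qf θ φ u v ^ (-(a + b + l))) ∂PiMeas ν₁ ∂PiMeas ν₂ :=
        lintegral_mono fun v => ofReal_integral_le_lintegral_ofReal _ _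
    _ ≤ _ := by
        simp only [qf_eq]
        exact hK _ _ _ hR hP hQ

lemma integral_integral_qf_rpow_le_abs_sub (hν₁ : -(1 / 2) ≤ ν₁) (hν₂ : -(1 / 2) ≤ ν₂)
    (haν₁ : a ≤ ν₁ + 1 / 2) (hbν₂ : b ≤ ν₂ + 1 / 2) (hl : 0 < l) (hal : 0 < a + l)
    (hbl : 0 < b + l) :
    ∃ K : ℝ≥0, ∀ θ ∈ Icc (0 : ℝ) π, ∀ φ ∈ Icc (0 : ℝ) π, θ ≠ φ →
      ∫ v, (∫ u, qf θ φ u v ^ (-(a + b + l)) ∂PiMeas ν₁) ∂PiMeas ν₂ ≤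
        K * (|θ - φ| ^ (2 * -l) * (θ + |θ - φ|) ^ (2 * -a) * (π - θ + |θ - φ|) ^ (2 * -b)) := by
  obtain ⟨K, hK⟩ := integral_integral_qf_rpow_le hν₁ hν₂ haν₁ hbν₂ hl hal hbl
  refine ⟨K * ((2 * π ^ 2) ^ |-l| * (8 * π ^ 2) ^ |-a| * (8 * π ^ 2) ^ |-b|).toNNReal,
    fun θ hθ φ hφ hne => (hK θ hθ φ hφ hne).trans ?_⟩
  have hΘ : 0 ≤ θ + |θ - φ| := add_nonneg hθ.1 (abs_nonneg _)
  have hD₁ : 0 ≤ 1 - cos (θ / 2) * cos (φ / 2) := sub_nonneg.2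
    (mul_le_one₀ (cos_le_one _) (cos_half_nonneg hφ) (cos_le_one _))
  have hD₂ : 0 ≤ 1 - sin (θ / 2) * sin (φ / 2) := sub_nonneg.2
    (mul_le_one₀ (sin_le_one _) (sin_half_nonneg hφ) (sin_le_one _))
  rw [NNReal.coe_mul, Real.coe_toNNReal _ (by positivity), mul_assoc (K : ℝ)]
  refine mul_le_mul_of_nonneg_left ?_ (NNReal.coe_nonneg K)
  calc _ ≤ (2 * π ^ 2) ^ |-l| * |θ - φ| ^ (2 * -l) *
        ((8 * π ^ 2) ^ |-a| * (θ + |θ - φ|) ^ (2 * -a)) *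
        ((8 * π ^ 2) ^ |-b| * (π - θ + |θ - φ|) ^ (2 * -b)) := by
        gcongr
        · exact one_sub_cos_half_sub_rpow_le _ hθ hφ hne
        · exact one_sub_cos_half_mul_cos_half_rpow_le _ hθ hφ hne
        · exact one_sub_sin_half_mul_sin_half_rpow_le _ hθ hφ hne
    _ = _ := by ring

lemma sin_half_add_rpow_mul_cos_half_add_rpow_le (p₁ p₂ : ℝ) {θ φ : ℝ} (hθ : θ ∈ Icc 0 π)
    (hφ : φ ∈ Icc 0 π) (hne : θ ≠ φ) :
    (sin (θ / 2) + sin (φ / 2)) ^ p₁ * (cos (θ / 2) + cos (φ / 2)) ^ p₂ ≤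
      (2 * π) ^ |p₁| * (2 * π) ^ |p₂| * ((θ + |θ - φ|) ^ p₁ * (π - θ + |θ - φ|) ^ p₂) := by
  have hcos := add_nonneg (cos_half_nonneg hθ) (cos_half_nonneg hφ)
  have hΘ : 0 ≤ θ + |θ - φ| := add_nonneg hθ.1 (abs_nonneg _)
  exact (mul_le_mul (sin_half_add_sin_half_rpow_le p₁ hθ hφ hne)
    (cos_half_add_cos_half_rpow_le p₂ hθ hφ hne) (by positivity) (by positivity)).trans_eq
    (by ring)

lemma rpow_mul_integral_integral_qf_rpow_le (α β ξ₁ ξ₂ : ℝ) (hν₁ : -(1 / 2) ≤ ν₁)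
    (hν₂ : -(1 / 2) ≤ ν₂) (hξν₁ : α + ξ₁ ≤ ν₁) (hξν₂ : β + ξ₂ ≤ ν₂) (hl : 0 < l)
    (hαl : 0 < α + ξ₁ + 1 / 2 + l) (hβl : 0 < β + ξ₂ + 1 / 2 + l) :
    ∃ K : ℝ≥0, ∀ θ ∈ Icc (0 : ℝ) π, ∀ φ ∈ Icc (0 : ℝ) π, θ ≠ φ →
      (sin (θ / 2) + sin (φ / 2)) ^ (2 * ξ₁) * (cos (θ / 2) + cos (φ / 2)) ^ (2 * ξ₂) *
          ∫ v, (∫ u, qf θ φ u v ^ (-(α + β + ξ₁ + ξ₂ + 1 + l)) ∂PiMeas ν₁) ∂PiMeas ν₂ ≤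
        K * (|θ - φ| ^ (-(2 * l)) * (θ + |θ - φ|) ^ (-(2 * α + 1)) *
          (π - θ + |θ - φ|) ^ (-(2 * β + 1))) := by
  obtain ⟨K, hK⟩ := integral_integral_qf_rpow_le_abs_sub hν₁ hν₂
    (by gcongr : α + ξ₁ + 1 / 2 ≤ ν₁ + 1 / 2) (by gcongr : β + ξ₂ + 1 / 2 ≤ ν₂ + 1 / 2) hl hαl hβl
  refine ⟨((2 * π) ^ |2 * ξ₁| * (2 * π) ^ |2 * ξ₂|).toNNReal * K, fun θ hθ φ hφ hne => ?_⟩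
  have hr : 0 < |θ - φ| := abs_pos.2 (sub_ne_zero.2 hne)
  have hΘ : 0 < θ + |θ - φ| := by linarith [hθ.1]
  have hΨ : 0 < π - θ + |θ - φ| := by linarith [hθ.2]
  have hsin := add_nonneg (sin_half_nonneg hθ) (sin_half_nonneg hφ)
  have hcos := add_nonneg (cos_half_nonneg hθ) (cos_half_nonneg hφ)
  have integral_le := hK θ hθ φ hφ hne
  rw [show α + ξ₁ + 1 / 2 + (β + ξ₂ + 1 / 2) + l = α + β + ξ₁ + ξ₂ + 1 + l by ring] at integral_le
  refine (mul_le_mul_of_nonneg_left integral_le (by positivity)).trans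
    ((mul_le_mul_of_nonneg_right
      (sin_half_add_rpow_mul_cos_half_add_rpow_le (2 * ξ₁) (2 * ξ₂) hθ hφ hne)
      (by positivity)).trans_eq ?_)
  rw [show -(2 * α + 1) = 2 * ξ₁ + 2 * -(α + ξ₁ + 1 / 2) by ring,
    show -(2 * β + 1) = 2 * ξ₂ + 2 * -(β + ξ₂ + 1 / 2) by ring, ← mul_neg,
    NNReal.coe_mul, Real.coe_toNNReal _ (by positivity), rpow_add hΘ, rpow_add hΨ]
  ring

end QfIntegral

/-! ### The measure of balls -/

lemma sin_half_rpow_le (p : ℝ) {t : ℝ} (ht : t ∈ Ioc 0 π) :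
    sin (t / 2) ^ p ≤ π ^ |p| * t ^ p := by
  have t_le := le_pi_mul_sin_half (Ioc_subset_Icc_self ht)
  refine rpow_le_of_le_mul_of_le_mul p
    (pos_of_mul_pos_right (ht.1.trans_le t_le) pi_pos.le) ht.1 ?_ t_le
  nlinarith [sin_half_le ht.1.le, ht.1, pi_gt_three]

lemma cos_half_rpow_le (q : ℝ) {t y : ℝ} (ht : t ∈ Icc 0 (π / 2)) (hy : y ∈ Icc (π / 2) (2 * π)) :
    cos (t / 2) ^ q ≤ (4 * π) ^ |q| * y ^ q := by
  have half_le : 1 / 2 ≤ cos (t / 2) := by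
    rw [← cos_pi_div_three]
    exact cos_le_cos_of_nonneg_of_le_pi (by linarith [ht.1]) (by linarith [pi_pos])
      (by linarith [ht.2, pi_pos])
  refine rpow_le_of_le_mul_of_le_mul q (by linarith) (by linarith [hy.1, pi_pos]) ?_ ?_
  · nlinarith [cos_le_one (t / 2), hy.1, pi_gt_three]
  · nlinarith [hy.2, pi_pos]

lemma sin_half_rpow_mul_cos_half_rpow_le (p q : ℝ) {t y : ℝ} (ht : t ∈ Ioc 0 (π / 2))
    (hy : y ∈ Icc (π / 2) (2 * π)) :
    sin (t / 2) ^ p * cos (t / 2) ^ q ≤ t ^ p * (π ^ |p| * ((4 * π) ^ |q| * y ^ q)) := by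
  have htπ : t ∈ Ioc 0 π := ⟨ht.1, by linarith [ht.2, pi_pos]⟩
  have hcos := cos_half_nonneg (Ioc_subset_Icc_self htπ)
  have ht0 := ht.1
  calc _ ≤ π ^ |p| * t ^ p * ((4 * π) ^ |q| * y ^ q) := by
        gcongr
        · exact sin_half_rpow_le p htπ
        · exact cos_half_rpow_le q (Ioc_subset_Icc_self ht) hy
    _ = _ := by ring

lemma lintegral_Ioo_inter_Ioc_sin_half_mul_cos_half_le {p : ℝ} (q : ℝ) (hp : -1 < p) :
    ∃ K : ℝ≥0, ∀ θ ∈ Icc (0 : ℝ) π, ∀ r, 0 < r → r ≤ π →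
      ∫⁻ t in Ioo (θ - r) (θ + r) ∩ Ioc 0 (π / 2),
          ENNReal.ofReal (sin (t / 2) ^ p * cos (t / 2) ^ q) ≤
        K * ENNReal.ofReal (r * (θ + r) ^ p * (π - θ + r) ^ q) := by
  have hp' : 0 < p + 1 := by linarith
  set A := 2 ^ |p| + 2 / (p + 1)
  refine ⟨(π ^ |p| * (4 * π) ^ |q| * A * 2).toNNReal, fun θ hθ r hr hrπ => ?_⟩
  have hΘ : 0 < θ + r := by linarith [hθ.1]
  have hΨ : 0 < π - θ + r := by linarith [hθ.2]
  set D := π ^ |p| * ((4 * π) ^ |q| * (π - θ + r) ^ q) with hD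
  calc _ ≤ ∫⁻ t in Ioo (θ - r) (θ + r) ∩ Ioc 0 (π / 2),
        ENNReal.ofReal (t ^ p) * ENNReal.ofReal D := by
        refine setLIntegral_mono' (measurableSet_Ioo.inter measurableSet_Ioc) fun t ht => ?_
        rw [← ENNReal.ofReal_mul' (by positivity)]
        exact ENNReal.ofReal_le_ofReal (sin_half_rpow_mul_cos_half_rpow_le p q ht.2
          ⟨by linarith [ht.1.1, ht.2.2], by linarith [hθ.1]⟩)
    _ ≤ ∫⁻ t in Ioc (max (θ - r) 0) (θ + r), ENNReal.ofReal (t ^ p) * ENNReal.ofReal D :=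
        lintegral_mono_set fun t ht => ⟨max_lt ht.1.1 ht.2.1, ht.1.2.le⟩
    _ ≤ ENNReal.ofReal (A * ((θ + r) ^ p * (2 * r))) * ENNReal.ofReal D := by
        rw [lintegral_mul_const' _ _ ENNReal.ofReal_ne_top]
        gcongr ?_ * _
        refine (lintegral_Ioc_rpow_le hp (le_max_right _ _)
          (max_le (by linarith) hΘ.le) hΘ).trans ?_
        gcongr
        linarith [le_max_left (θ - r) 0]
    _ = _ := by
        rw [← ENNReal.ofReal_mul (by positivity), ← ENNReal.ofReal,
          ← ENNReal.ofReal_mul (by positivity), hD]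
        ring_nf

lemma setLIntegral_Ico_eq_pi_sub (p q θ r : ℝ) :
    ∫⁻ t in Ioo (θ - r) (θ + r) ∩ Ico (π / 2) π,
        ENNReal.ofReal (sin (t / 2) ^ p * cos (t / 2) ^ q) =
      ∫⁻ t in Ioo (π - θ - r) (π - θ + r) ∩ Ioc 0 (π / 2),
        ENNReal.ofReal (sin (t / 2) ^ q * cos (t / 2) ^ p) := by
  rw [← setLIntegral_comp_sub_left π]
  simp only [sin_half_pi_sub, cos_half_pi_sub, preimage_inter, preimage_const_sub_Ioo,
    preimage_const_sub_Ico, sub_self, sub_half, mul_comm]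
  ring_nf

lemma muab_ballI (α β θ r : ℝ) : muab α β (ballI θ r) =
    ∫⁻ t in Ioo (θ - r) (θ + r) ∩ Ioo 0 π,
      ENNReal.ofReal (sin (t / 2) ^ (2 * α + 1) * cos (t / 2) ^ (2 * β + 1)) := by
  have hball : MeasurableSet (ballI θ r) := measurableSet_Ioo.inter measurableSet_Icc
  rw [muab, withDensity_apply', Measure.restrict_restrict hball, ballI, inter_assoc, inter_self]
  exact congrArg (lintegral · _)
    (Measure.restrict_congr_set ((ae_eq_refl _).inter Ioo_ae_eq_Icc.symm))

lemma muab_ballI_le {α β : ℝ} (hα : -1 < α) (hβ : -1 < β) :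
    ∃ K : ℝ≥0, ∀ θ ∈ Icc (0 : ℝ) π, ∀ r, 0 < r → r ≤ π →
      muab α β (ballI θ r) ≤
        K * ENNReal.ofReal (r * (θ + r) ^ (2 * α + 1) * (π - θ + r) ^ (2 * β + 1)) := by
  obtain ⟨K₁, hK₁⟩ := lintegral_Ioo_inter_Ioc_sin_half_mul_cos_half_le (2 * β + 1)
    (by linarith : -1 < 2 * α + 1)
  obtain ⟨K₂, hK₂⟩ := lintegral_Ioo_inter_Ioc_sin_half_mul_cos_half_le (2 * α + 1)
    (by linarith : -1 < 2 * β + 1)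
  refine ⟨K₁ + K₂, fun θ hθ r hr hrπ => ?_⟩
  have cover : Ioo (θ - r) (θ + r) ∩ Ioo 0 π ⊆
      (Ioo (θ - r) (θ + r) ∩ Ioc 0 (π / 2)) ∪ (Ioo (θ - r) (θ + r) ∩ Ico (π / 2) π) := by
    rw [← inter_union_distrib_left]
    exact inter_subset_inter_right _ fun t ht =>
      (le_total t (π / 2)).imp (fun h => ⟨ht.1, h⟩) fun h => ⟨h, ht.2⟩
  have right := hK₂ (π - θ) (pi_sub_mem_Icc hθ) r hr hrπ
  rw [← setLIntegral_Ico_eq_pi_sub, sub_sub_cancel, mul_right_comm r] at right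
  rw [muab_ballI, ENNReal.coe_add, add_mul]
  exact (lintegral_mono_set cover).trans
    ((lintegral_union_le _ _ _).trans (add_le_add (hK₁ θ hθ r hr hrπ) right))

lemma muab_ballI_pos (α β : ℝ) {θ r : ℝ} (hθ : θ ∈ Icc 0 π) (hr : 0 < r) :
    0 < muab α β (ballI θ r) := by
  rw [muab_ballI, setLIntegral_pos_iff (by fun_prop)]
  have support_superset : Ioo (max (θ - r) 0) (min (θ + r) π) ⊆ Function.support (fun t : ℝ =>
      ENNReal.ofReal (sin (t / 2) ^ (2 * α + 1) * cos (t / 2) ^ (2 * β + 1))) ∩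
        (Ioo (θ - r) (θ + r) ∩ Ioo 0 π) := by
    intro t ht
    rw [← Ioo_inter_Ioo] at ht
    have hs : 0 < sin (t / 2) :=
      sin_pos_of_pos_of_lt_pi (by linarith [ht.2.1]) (by linarith [ht.2.1, ht.2.2])
    have hc : 0 < cos (t / 2) :=
      cos_pos_of_mem_Ioo ⟨by linarith [ht.2.1, pi_pos], by linarith [ht.2.2]⟩
    exact ⟨(ENNReal.ofReal_pos.2 (by positivity)).ne', ht⟩
  refine (Measure.measure_Ioo_pos volume |>.2 ?_).trans_le (measure_mono support_superset)
  have := pi_pos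
  rw [max_lt_iff, lt_min_iff, lt_min_iff]
  exact ⟨⟨by linarith, by linarith [hθ.2]⟩, by linarith [hθ.1], pi_pos⟩

lemma toReal_muab_ballI_mem_Ioc {α β : ℝ} (hα : -1 < α) (hβ : -1 < β) :
    ∃ K : ℝ≥0, ∀ θ ∈ Icc (0 : ℝ) π, ∀ r, 0 < r → r ≤ π →
      (muab α β (ballI θ r)).toReal ∈
        Ioc 0 (K * (r * (θ + r) ^ (2 * α + 1) * (π - θ + r) ^ (2 * β + 1))) := by
  obtain ⟨K, hK⟩ := muab_ballI_le hα hβ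
  refine ⟨K, fun θ hθ r hr hrπ => ?_⟩
  have hΘ : 0 < θ + r := by linarith [hθ.1]
  have hΨ : 0 < π - θ + r := by linarith [hθ.2]
  have le_ofReal := hK θ hθ r hr hrπ
  rw [← ENNReal.ofReal_coe_nnreal, ← ENNReal.ofReal_mul (NNReal.coe_nonneg K)] at le_ofReal
  exact ⟨ENNReal.toReal_pos (muab_ballI_pos α β hθ hr).ne'
    (ne_top_of_le_ne_top ENNReal.ofReal_ne_top le_ofReal),
    ENNReal.toReal_le_of_le_ofReal (by positivity) le_ofReal⟩

theorem bridge_lemma_general (α β ξ₁ ξ₂ ν₁ ν₂ l : ℝ) (hα : -1 < α) (hβ : -1 < β) (hl : 0 < l)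
    (hν₁ : -(1 / 2) ≤ ν₁) (hν₂ : -(1 / 2) ≤ ν₂) (hξν₁ : α + ξ₁ ≤ ν₁) (hξν₂ : β + ξ₂ ≤ ν₂)
    (hαl : 0 < α + ξ₁ + 1 / 2 + l) (hβl : 0 < β + ξ₂ + 1 / 2 + l) :
    ∃ C : ℝ, 0 < C ∧ ∀ θ ∈ Icc (0 : ℝ) π, ∀ φ ∈ Icc (0 : ℝ) π, θ ≠ φ →
      (sin (θ / 2) + sin (φ / 2)) ^ (2 * ξ₁) * (cos (θ / 2) + cos (φ / 2)) ^ (2 * ξ₂) *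
        ∫ v, (∫ u, qf θ φ u v ^ (-(α + β + ξ₁ + ξ₂ + 1 + l)) ∂PiMeas ν₁) ∂PiMeas ν₂ ≤
        C / (|θ - φ| ^ (2 * l - 1) * (muab α β (ballI θ |θ - φ|)).toReal) := by
  obtain ⟨K₁, hK₁⟩ :=
    rpow_mul_integral_integral_qf_rpow_le α β ξ₁ ξ₂ hν₁ hν₂ hξν₁ hξν₂ hl hαl hβl
  obtain ⟨K₂, hK₂⟩ := toReal_muab_ballI_mem_Ioc hα hβ
  refine ⟨K₁ * K₂ + 1, by positivity, fun θ hθ φ hφ hne => ?_⟩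
  have hr : 0 < |θ - φ| := abs_pos.2 (sub_ne_zero.2 hne)
  have hrπ : |θ - φ| ≤ π := abs_le.2 ⟨by linarith [hθ.1, hφ.2], by linarith [hθ.2, hφ.1]⟩
  have hΘ : 0 < θ + |θ - φ| := by linarith [hθ.1]
  have hΨ : 0 < π - θ + |θ - φ| := by linarith [hθ.2]
  obtain ⟨hm, hm_le⟩ := hK₂ θ hθ _ hr hrπ
  rw [le_div_iff₀ (by positivity)]
  calc _ ≤ K₁ * (|θ - φ| ^ (-(2 * l)) * (θ + |θ - φ|) ^ (-(2 * α + 1)) *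
          (π - θ + |θ - φ|) ^ (-(2 * β + 1))) *
        (|θ - φ| ^ (2 * l - 1) * (K₂ * (|θ - φ| * (θ + |θ - φ|) ^ (2 * α + 1) *
          (π - θ + |θ - φ|) ^ (2 * β + 1)))) :=
        mul_le_mul (hK₁ θ hθ φ hφ hne) (by gcongr) (by positivity) (by positivity)
    _ = K₁ * K₂ := by
        rw [rpow_neg hr.le, rpow_neg hΘ.le, rpow_neg hΨ.le, rpow_sub_one hr.ne']
        field_simp
    _ ≤ K₁ * K₂ + 1 := by linarith

theorem bridge_lemma (α β ξ₁ ξ₂ κ₁ κ₂ : ℝ) (hα : -1 < α) (hβ : -1 < β)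
    (hξ₁ : 0 ≤ ξ₁) (hξ₂ : 0 ≤ ξ₂) (hκ₁ : 0 ≤ κ₁) (hκ₂ : 0 ≤ κ₂)
    (h₁ : -(1/2) ≤ α + ξ₁ + κ₁) (h₂ : -(1/2) ≤ β + ξ₂ + κ₂) :
    ∃ C : ℝ, 0 < C ∧ ∀ θ ∈ Icc (0 : ℝ) π, ∀ φ ∈ Icc (0 : ℝ) π, θ ≠ φ →
      ((Real.sin (θ/2) + Real.sin (φ/2)) ^ (2 * ξ₁) *
        (Real.cos (θ/2) + Real.cos (φ/2)) ^ (2 * ξ₂) *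
        ∫ v, (∫ u, qf θ φ u v ^ (-(α + β + ξ₁ + ξ₂ + 3/2)) ∂(PiMeas (α + ξ₁ + κ₁)))
          ∂(PiMeas (β + ξ₂ + κ₂))
        ≤ C / (muab α β (ballI θ |θ - φ|)).toReal) ∧
      ((Real.sin (θ/2) + Real.sin (φ/2)) ^ (2 * ξ₁) *
        (Real.cos (θ/2) + Real.cos (φ/2)) ^ (2 * ξ₂) *
        ∫ v, (∫ u, qf θ φ u v ^ (-(α + β + ξ₁ + ξ₂ + 2)) ∂(PiMeas (α + ξ₁ + κ₁)))
          ∂(PiMeas (β + ξ₂ + κ₂))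
        ≤ C / (|θ - φ| * (muab α β (ballI θ |θ - φ|)).toReal)) := by
  obtain ⟨C₁, hC₁, bound₁⟩ := bridge_lemma_general α β ξ₁ ξ₂ _ _ (1 / 2) hα hβ (by norm_num) h₁ h₂
    (by linarith) (by linarith) (by linarith) (by linarith)
  obtain ⟨C₂, -, bound₂⟩ := bridge_lemma_general α β ξ₁ ξ₂ _ _ 1 hα hβ one_pos h₁ h₂
    (by linarith) (by linarith) (by linarith) (by linarith)
  have one_add_half : (1 : ℝ) + 1 / 2 = 3 / 2 := by norm_num
  have two_sub_one : (2 : ℝ) - 1 = 1 := by norm_num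
  refine ⟨max C₁ C₂, lt_max_of_lt_left hC₁, fun θ hθ φ hφ hne => ⟨?_, ?_⟩⟩
  · refine le_trans ?_ (div_le_div_of_nonneg_right (le_max_left C₁ C₂) ENNReal.toReal_nonneg)
    simpa only [add_assoc _ (1 : ℝ), one_add_half, mul_one_div_cancel (two_ne_zero (α := ℝ)),
      sub_self, rpow_zero, one_mul] using bound₁ θ hθ φ hφ hne
  · refine le_trans ?_ (div_le_div_of_nonneg_right (le_max_right C₁ C₂) (by positivity))
    simpa only [add_assoc _ (1 : ℝ), one_add_one_eq_two, mul_one, two_sub_one, rpow_one] using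
      bound₂ θ hθ φ hφ hne
end
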